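/- Let ρ^{ABC} be a state of a tripartite quantum system on finite-dimensional Hilbert spaces that saturates strong subadditivity at pivot B, i.e. I(A;C|B) = 0. Then the reduced state ρ^{AC} on H_A ⊗ H_C is separable, i.e. it is a convex combination of product states σ_i^A ⊗ ω_i^C. -/

import Mathlib

open scoped BigOperators ComplexOrder

/-- Von Neumann entropy (base 2) of a matrix: for a Hermitian matrix, the Shannon
entropy of its eigenvalues; junk value `0` for non-Hermitian matrices. -/
noncomputable def vNEntropy {n : Type*} [Fintype n] [DecidableEq n] (M : Matrix n n ℂ) : ℝ :=
  if h : M.IsHermitian then -∑ i, (h.eigenvalues i) * Real.logb 2 (h.eigenvalues i) else 0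

/-- A density matrix: positive semidefinite with trace one. -/
def IsState {n : Type*} [Fintype n] [DecidableEq n] (M : Matrix n n ℂ) : Prop :=
  M.PosSemidef ∧ M.trace = 1

section Tri

variable {A B C : Type*} [Fintype A] [DecidableEq A] [Fintype B] [DecidableEq B]
  [Fintype C] [DecidableEq C]
  (ρ : Matrix (A × B × C) (A × B × C) ℂ)

/-- The reduced state on `A ⊗ C` of a tripartite state. -/
noncomputable def redAC : Matrix (A × C) (A × C) ℂ :=
  Matrix.of fun p q : A × C => ∑ b, ρ (p.1, b, p.2) (q.1, b, q.2)

/-- Entropies of the marginals of a tripartite state. -/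
noncomputable def S3A : ℝ :=
  vNEntropy (Matrix.of fun a a' : A => ∑ b, ∑ c, ρ (a, b, c) (a', b, c))
noncomputable def S3B : ℝ :=
  vNEntropy (Matrix.of fun b b' : B => ∑ a, ∑ c, ρ (a, b, c) (a, b', c))
noncomputable def S3C : ℝ :=
  vNEntropy (Matrix.of fun c c' : C => ∑ a, ∑ b, ρ (a, b, c) (a, b, c'))
noncomputable def S3AB : ℝ :=
  vNEntropy (Matrix.of fun p q : A × B => ∑ c, ρ (p.1, p.2, c) (q.1, q.2, c))
noncomputable def S3AC : ℝ := vNEntropy (redAC ρ)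
noncomputable def S3BC : ℝ :=
  vNEntropy (Matrix.of fun p q : B × C => ∑ a, ρ (a, p.1, p.2) (a, q.1, q.2))
noncomputable def S3ABC : ℝ := vNEntropy ρ

end Tri

open scoped Kronecker

/-!
Saturation of strong subadditivity says that the relative entropy of `ρ^{ABC}` and `1 ⊗ ρ^{BC}` does
not drop when `C` is discarded. By Petz's equality condition `ρ^{ABC}` is then recovered from
`ρ^{AB}` by a positive map `R` that leaves `A` untouched. The equality condition itself is obtained
from a variational integral representation of the relative entropy: each integrand is the maximum of
a quadratic functional, over a larger algebra for `ρ^{ABC}` than for `ρ^{AB}`, so equal integrals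
force equal maximisers.

Among all decompositions `ρ^{AB} = ∑ θ_k` take one that maximises the average purity of the
normalised marginals on `A`. Recovering each `θ_k` and measuring `C` refines the decomposition while
each `A`-marginal is only split into pieces; maximality and strict convexity make the pieces
proportional, so in every `R(θ_k)` the systems `A` and `C` are uncorrelated. Summing over `k`
exhibits `ρ^{AC}` as a separable operator.
-/

open Matrix

section FunctionalCalculus

variable {n m : Type*} [Fintype n] [DecidableEq n] [Fintype m] [DecidableEq m]

lemma continuousOn_spectrum_matrix (f : ℝ → ℝ) (M : Matrix n n ℂ) :
    ContinuousOn f (spectrum ℝ M) :=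
  M.finite_real_spectrum.continuousOn f

lemma cfc_id_matrix {M : Matrix n n ℂ} (hM : M.IsHermitian) : cfc (fun x : ℝ => x) M = M :=
  cfc_id' ℝ M hM

lemma cfc_mul_cfc_matrix (f g : ℝ → ℝ) (M : Matrix n n ℂ) :
    cfc f M * cfc g M = cfc (fun x => f x * g x) M :=
  (cfc_mul f g M (continuousOn_spectrum_matrix f M) (continuousOn_spectrum_matrix g M)).symm

lemma isHermitian_cfc (f : ℝ → ℝ) (M : Matrix n n ℂ) : (cfc f M).IsHermitian :=
  cfc_predicate f M

lemma spectrum_nonneg_of_posSemidef {M : Matrix n n ℂ} (hM : M.PosSemidef) {x : ℝ}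
    (hx : x ∈ spectrum ℝ M) : 0 ≤ x := by
  rw [hM.1.spectrum_real_eq_range_eigenvalues] at hx
  obtain ⟨i, rfl⟩ := hx
  exact hM.eigenvalues_nonneg i

lemma cfc_sqrt_mul_cfc_sqrt {M : Matrix n n ℂ} (hM : M.PosSemidef) :
    cfc Real.sqrt M * cfc Real.sqrt M = M := by
  rw [cfc_mul_cfc_matrix, cfc_congr fun x hx =>
    Real.mul_self_sqrt (spectrum_nonneg_of_posSemidef hM hx)]
  exact cfc_id_matrix hM.1

lemma map_cfc_matrix (ι : Matrix m m ℂ →⋆ₐ[ℂ] Matrix n n ℂ) (f : ℝ → ℝ) {M : Matrix m m ℂ}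
    (hM : M.IsHermitian) : ι (cfc f M) = cfc f (ι M) :=
  StarAlgHom.map_cfc ι f M (continuousOn_spectrum_matrix f M)
    (LinearMap.continuous_of_finiteDimensional ι.toAlgHom.toLinearMap) hM (hM.isSelfAdjoint.map ι)

/-- The orthogonal projection onto the support of a Hermitian matrix. -/
noncomputable def suppProj (M : Matrix n n ℂ) : Matrix n n ℂ :=
  cfc (fun x : ℝ => if x = 0 then 0 else 1) M

lemma self_mul_suppProj {M : Matrix n n ℂ} (hM : M.IsHermitian) : M * suppProj M = M := by
  calc M * suppProj M = cfc (fun x : ℝ => x) M * suppProj M := by rw [cfc_id_matrix hM]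
    _ = cfc (fun x : ℝ => x) M := by
      rw [suppProj, cfc_mul_cfc_matrix]
      exact cfc_congr fun x _ => by by_cases hx : x = 0 <;> simp [hx]
    _ = M := cfc_id_matrix hM

/-- The square root of the Moore–Penrose inverse of a positive semidefinite matrix: the convention
`0⁻¹ = 0` makes it vanish on the kernel. -/
noncomputable def pinvSqrt (M : Matrix n n ℂ) : Matrix n n ℂ :=
  cfc (fun x : ℝ => (√x)⁻¹) M

lemma pinvSqrt_mul_cfc_sqrt {M : Matrix n n ℂ} (hM : M.PosSemidef) :
    pinvSqrt M * cfc Real.sqrt M = suppProj M := by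
  rw [pinvSqrt, cfc_mul_cfc_matrix]
  refine cfc_congr fun x hx => ?_
  rcases (spectrum_nonneg_of_posSemidef hM hx).eq_or_lt with rfl | hpos
  · simp
  · simp [hpos.ne', (Real.sqrt_pos.2 hpos).ne']

lemma pinvSqrt_mul_self_mul_pinvSqrt {M : Matrix n n ℂ} (hM : M.PosSemidef) :
    pinvSqrt M * M * pinvSqrt M = suppProj M := by
  calc pinvSqrt M * M * pinvSqrt M
      = pinvSqrt M * cfc (fun x : ℝ => x) M * pinvSqrt M := by rw [cfc_id_matrix hM.1]
    _ = suppProj M := by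
      rw [pinvSqrt, cfc_mul_cfc_matrix, cfc_mul_cfc_matrix]
      refine cfc_congr fun x hx => ?_
      rcases (spectrum_nonneg_of_posSemidef hM hx).eq_or_lt with rfl | hpos
      · simp
      · have hsqrt : √x ≠ 0 := (Real.sqrt_pos.2 hpos).ne'
        simp only [hpos.ne', if_false]
        field_simp
        exact (Real.sq_sqrt hpos.le).symm

lemma cfc_sqrt_mul_eq_of_mul_eq {ρ P : Matrix n n ℂ} (hρ : ρ.PosSemidef) (h : ρ * P = ρ) :
    cfc Real.sqrt ρ * P = cfc Real.sqrt ρ := by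
  have hker : cfc Real.sqrt ρ * (1 - P) = 0 := by
    rw [← conjTranspose_mul_self_eq_zero, conjTranspose_mul, (isHermitian_cfc _ ρ).eq,
      Matrix.mul_assoc, ← Matrix.mul_assoc (cfc _ ρ), cfc_sqrt_mul_cfc_sqrt hρ, Matrix.mul_sub,
      Matrix.mul_one, h, sub_self, Matrix.mul_zero]
  rw [Matrix.mul_sub, Matrix.mul_one, sub_eq_zero] at hker
  exact hker.symm

end FunctionalCalculus

section PosSemidef

variable {n : Type*} [Fintype n]

lemma exists_conjTranspose_mul_self_eq {M : Matrix n n ℂ} (hM : M.PosSemidef) :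
    ∃ F : Matrix n n ℂ, Fᴴ * F = M := by
  classical
  exact ⟨cfc Real.sqrt M, by rw [(isHermitian_cfc _ M).eq, cfc_sqrt_mul_cfc_sqrt hM]⟩

lemma mul_eq_zero_of_trace_eq_zero {M : Matrix n n ℂ} (hM : M.PosSemidef) {Z : Matrix n n ℂ}
    (h : (Zᴴ * M * Z).trace = 0) : M * Z = 0 := by
  obtain ⟨F, rfl⟩ := exists_conjTranspose_mul_self_eq hM
  have hsq : Zᴴ * (Fᴴ * F) * Z = (F * Z)ᴴ * (F * Z) := by
    simp only [conjTranspose_mul, Matrix.mul_assoc]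
  rw [hsq, trace_conjTranspose_mul_self_eq_zero_iff] at h
  rw [Matrix.mul_assoc, h, Matrix.mul_zero]

lemma mul_eq_of_mul_eq_of_le {ρ τ P : Matrix n n ℂ} (hτ : τ.PosSemidef)
    (hle : (ρ - τ).PosSemidef) (h : ρ * P = ρ) : τ * P = τ := by
  classical
  have htrace : ((1 - P)ᴴ * τ * (1 - P)).trace = 0 := by
    refine le_antisymm ?_ (hτ.conjTranspose_mul_mul_same (1 - P)).trace_nonneg
    have hρ : ((1 - P)ᴴ * ρ * (1 - P)).trace = 0 := by
      rw [Matrix.mul_assoc, Matrix.mul_sub ρ, h, Matrix.mul_one, sub_self, Matrix.mul_zero,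
        trace_zero]
    have hdiff := (hle.conjTranspose_mul_mul_same (1 - P)).trace_nonneg
    rw [Matrix.mul_sub _ ρ, Matrix.sub_mul, trace_sub, hρ, zero_sub] at hdiff
    exact neg_nonneg.1 hdiff
  have hzero := mul_eq_zero_of_trace_eq_zero hτ htrace
  rw [Matrix.mul_sub, Matrix.mul_one, sub_eq_zero] at hzero
  exact hzero.symm

end PosSemidef

section EigenCoord

variable {n : Type*} [Fintype n] [DecidableEq n] {σ ρ : Matrix n n ℂ}

/-- The entries of a matrix relative to an eigenbasis of `σ` (rows) and of `ρ` (columns). -/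
noncomputable def eigenCoord (hσ : σ.IsHermitian) (hρ : ρ.IsHermitian) :
    Matrix n n ℂ ≃ₗ[ℂ] Matrix n n ℂ where
  toFun X := star (hσ.eigenvectorUnitary : Matrix n n ℂ) * X * hρ.eigenvectorUnitary
  invFun X :=
    (hσ.eigenvectorUnitary : Matrix n n ℂ) * X * star (hρ.eigenvectorUnitary : Matrix n n ℂ)
  map_add' X Y := by rw [Matrix.mul_add, Matrix.add_mul]
  map_smul' c X := by simp
  left_inv X := by simp [Matrix.mul_assoc, ← Matrix.mul_assoc _ _ X]
  right_inv X := by simp [Matrix.mul_assoc, ← Matrix.mul_assoc _ _ X]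

variable (hσ : σ.IsHermitian) (hρ : ρ.IsHermitian)

lemma eigenCoord_cfc_mul (f : ℝ → ℝ) (X : Matrix n n ℂ) (j i : n) :
    eigenCoord hσ hρ (cfc f σ * X) j i = f (hσ.eigenvalues j) * eigenCoord hσ hρ X j i := by
  have hmat : eigenCoord hσ hρ (cfc f σ * X) =
      diagonal (fun k => (f (hσ.eigenvalues k) : ℂ)) * eigenCoord hσ hρ X := by
    rw [hσ.cfc_eq, IsHermitian.cfc, Unitary.conjStarAlgAut_apply]
    simp only [eigenCoord, LinearEquiv.coe_mk, LinearMap.coe_mk, AddHom.coe_mk,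
      ← Matrix.mul_assoc, Unitary.coe_star_mul_self, Matrix.one_mul]
    rfl
  rw [hmat, diagonal_mul]

lemma eigenCoord_mul_cfc (f : ℝ → ℝ) (X : Matrix n n ℂ) (j i : n) :
    eigenCoord hσ hρ (X * cfc f ρ) j i = eigenCoord hσ hρ X j i * f (hρ.eigenvalues i) := by
  have hmat : eigenCoord hσ hρ (X * cfc f ρ) =
      eigenCoord hσ hρ X * diagonal (fun k => (f (hρ.eigenvalues k) : ℂ)) := by
    rw [hρ.cfc_eq, IsHermitian.cfc, Unitary.conjStarAlgAut_apply]
    simp only [eigenCoord, LinearEquiv.coe_mk, LinearMap.coe_mk, AddHom.coe_mk,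
      Matrix.mul_assoc, Unitary.coe_star_mul_self, Matrix.mul_one]
    rfl
  rw [hmat, mul_diagonal]

lemma eigenCoord_mul_left (X : Matrix n n ℂ) (j i : n) :
    eigenCoord hσ hρ (σ * X) j i = hσ.eigenvalues j * eigenCoord hσ hρ X j i := by
  simpa only [cfc_id_matrix hσ] using eigenCoord_cfc_mul hσ hρ (fun x => x) X j i

lemma eigenCoord_mul_right (X : Matrix n n ℂ) (j i : n) :
    eigenCoord hσ hρ (X * ρ) j i = eigenCoord hσ hρ X j i * hρ.eigenvalues i := by
  simpa only [cfc_id_matrix hρ] using eigenCoord_mul_cfc hσ hρ (fun x => x) X j i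

lemma eigenCoord_cfc (f : ℝ → ℝ) (j i : n) :
    eigenCoord hσ hρ (cfc f ρ) j i = eigenCoord hσ hρ 1 j i * f (hρ.eigenvalues i) := by
  simpa only [Matrix.one_mul] using eigenCoord_mul_cfc hσ hρ f 1 j i

lemma eigenCoord_self (j i : n) :
    eigenCoord hσ hρ ρ j i = eigenCoord hσ hρ 1 j i * hρ.eigenvalues i := by
  simpa only [Matrix.one_mul] using eigenCoord_mul_right hσ hρ 1 j i

lemma trace_conjTranspose_mul_eq_sum_eigenCoord (X Y : Matrix n n ℂ) :
    (Xᴴ * Y).trace =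
      ∑ j, ∑ i, star (eigenCoord hσ hρ X j i) * eigenCoord hσ hρ Y j i := by
  have htrace : (Xᴴ * Y).trace = ((eigenCoord hσ hρ X)ᴴ * eigenCoord hσ hρ Y).trace := by
    have hprod : (eigenCoord hσ hρ X)ᴴ * eigenCoord hσ hρ Y =
        star (hρ.eigenvectorUnitary : Matrix n n ℂ) * (Xᴴ * Y) * hρ.eigenvectorUnitary := by
      calc (eigenCoord hσ hρ X)ᴴ * eigenCoord hσ hρ Y
          = star (hρ.eigenvectorUnitary : Matrix n n ℂ) * (Xᴴ *
            ((hσ.eigenvectorUnitary : Matrix n n ℂ) *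
              star (hσ.eigenvectorUnitary : Matrix n n ℂ)) * Y) * hρ.eigenvectorUnitary := by
            simp only [eigenCoord, LinearEquiv.coe_mk, LinearMap.coe_mk, AddHom.coe_mk,
              star_eq_conjTranspose, conjTranspose_mul, conjTranspose_conjTranspose,
              Matrix.mul_assoc]
        _ = _ := by rw [Unitary.mul_star_self_of_mem hσ.eigenvectorUnitary.2, Matrix.mul_one]
    rw [hprod, trace_mul_cycle, Unitary.mul_star_self_of_mem hρ.eigenvectorUnitary.2,
      Matrix.one_mul]
  rw [htrace, trace, Finset.sum_comm]
  simp only [diag_apply, Matrix.mul_apply, conjTranspose_apply]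

/-- The weights `|⟨uⱼ, vᵢ⟩|²` between the eigenvectors `uⱼ` of `σ` and `vᵢ` of `ρ`. -/
noncomputable def eigenOverlap (j i : n) : ℝ :=
  Complex.normSq (eigenCoord hσ hρ 1 j i)

lemma trace_mul_eq_sum_eigenOverlap {X : Matrix n n ℂ} {x : n → n → ℝ}
    (hX : ∀ j i, eigenCoord hσ hρ X j i = x j i * eigenCoord hσ hρ 1 j i) :
    (ρ * X).trace.re = ∑ j, ∑ i, hρ.eigenvalues i * eigenOverlap hσ hρ j i * x j i := by
  have htrace := trace_conjTranspose_mul_eq_sum_eigenCoord hσ hρ ρ X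
  rw [hρ.eq] at htrace
  simp only [htrace, Complex.re_sum, eigenCoord_self, hX]
  refine Finset.sum_congr rfl fun j _ => Finset.sum_congr rfl fun i _ => ?_
  simp only [eigenOverlap, Complex.normSq_apply, Complex.star_def, Complex.mul_re, Complex.mul_im,
    Complex.conj_re, Complex.conj_im, Complex.ofReal_re, Complex.ofReal_im, map_mul,
    Complex.conj_ofReal]
  ring

lemma trace_mul_cfc_left_eq_sum_eigenOverlap (f : ℝ → ℝ) :
    (ρ * cfc f σ).trace.re =
      ∑ j, ∑ i, hρ.eigenvalues i * eigenOverlap hσ hρ j i * f (hσ.eigenvalues j) :=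
  trace_mul_eq_sum_eigenOverlap hσ hρ fun j i => by
    simpa only [Matrix.mul_one] using eigenCoord_cfc_mul hσ hρ f 1 j i

lemma trace_mul_cfc_right_eq_sum_eigenOverlap (f : ℝ → ℝ) :
    (ρ * cfc f ρ).trace.re =
      ∑ j, ∑ i, hρ.eigenvalues i * eigenOverlap hσ hρ j i * f (hρ.eigenvalues i) :=
  trace_mul_eq_sum_eigenOverlap hσ hρ fun j i => by rw [eigenCoord_cfc, mul_comm]

end EigenCoord

section Marginal

variable {n m : Type*} [Fintype n] [DecidableEq n] [Fintype m] [DecidableEq m]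

/-- `ρ'` is the marginal of `ρ` on the subalgebra embedded by `ι`: the two matrices define the same
functional there. Partial traces are the case `ι X = X ⊗ 1`. -/
def IsMarginal (ι : Matrix m m ℂ →⋆ₐ[ℂ] Matrix n n ℂ) (ρ : Matrix n n ℂ) (ρ' : Matrix m m ℂ) :
    Prop :=
  ∀ X, (ι X * ρ).trace = (X * ρ').trace

variable {ι : Matrix m m ℂ →⋆ₐ[ℂ] Matrix n n ℂ} {ρ : Matrix n n ℂ} {ρ' : Matrix m m ℂ}

lemma conjTranspose_starAlgHom (ι : Matrix m m ℂ →⋆ₐ[ℂ] Matrix n n ℂ) (X : Matrix m m ℂ) :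
    (ι X)ᴴ = ι Xᴴ :=
  (map_star ι X).symm

lemma IsMarginal.trace_eq (h : IsMarginal ι ρ ρ') : ρ.trace = ρ'.trace := by
  simpa only [map_one, Matrix.one_mul] using h 1

lemma IsMarginal.mul_map_suppProj (h : IsMarginal ι ρ ρ') (hρ : ρ.PosSemidef)
    (hρ' : ρ'.IsHermitian) : ρ * ι (suppProj ρ') = ρ := by
  have hker : ρ' * (1 - suppProj ρ') = 0 := by
    rw [Matrix.mul_sub, Matrix.mul_one, self_mul_suppProj hρ', sub_self]
  have htrace : ((ι (1 - suppProj ρ'))ᴴ * ρ * ι (1 - suppProj ρ')).trace = 0 := by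
    rw [trace_mul_comm, ← Matrix.mul_assoc, conjTranspose_starAlgHom, ← map_mul, h, trace_mul_comm,
      ← Matrix.mul_assoc, hker, Matrix.zero_mul, trace_zero]
  have hzero := mul_eq_zero_of_trace_eq_zero hρ htrace
  rw [map_sub, map_one, Matrix.mul_sub, Matrix.mul_one, sub_eq_zero] at hzero
  exact hzero.symm

lemma IsMarginal.mul_suppProj_map (h : IsMarginal ι ρ ρ') (hρ : ρ.PosSemidef)
    (hρ' : ρ'.IsHermitian) : ρ * suppProj (ι ρ') = ρ := by
  rw [suppProj, ← map_cfc_matrix ι _ hρ', ← suppProj, h.mul_map_suppProj hρ hρ']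

end Marginal

section Sylvester

variable {n m : Type*} [Fintype n] [DecidableEq n] [Fintype m] [DecidableEq m]
  {σ ρ : Matrix n n ℂ} {σ' ρ' : Matrix m m ℂ}

/-- The Sylvester operator `X ↦ σX + tXρ`, positive semidefinite for the Hilbert–Schmidt inner
product when `σ, ρ ≥ 0` and `t ≥ 0`. -/
noncomputable def sylvester (σ ρ : Matrix n n ℂ) (t : ℝ) : Matrix n n ℂ →ₗ[ℂ] Matrix n n ℂ :=
  LinearMap.mulLeft ℂ σ + (t : ℂ) • LinearMap.mulRight ℂ ρ

lemma sylvester_apply (σ ρ : Matrix n n ℂ) (t : ℝ) (X : Matrix n n ℂ) :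
    sylvester σ ρ t X = σ * X + (t : ℂ) • (X * ρ) := rfl

/-- The concave quadratic functional `2 Re⟨X, ρ⟩ - ⟨X, sylvester X⟩` for the Hilbert–Schmidt inner
product; its maximisers are the solutions of `sylvester σ ρ t X = ρ`. -/
noncomputable def sylvesterEnergy (σ ρ : Matrix n n ℂ) (t : ℝ) (X : Matrix n n ℂ) : ℝ :=
  2 * (Xᴴ * ρ).trace.re - (Xᴴ * sylvester σ ρ t X).trace.re

lemma eigenCoord_sylvester (hσ : σ.IsHermitian) (hρ : ρ.IsHermitian) (t : ℝ) (X : Matrix n n ℂ)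
    (j i : n) : eigenCoord hσ hρ (sylvester σ ρ t X) j i =
      ((hσ.eigenvalues j + t * hρ.eigenvalues i : ℝ) : ℂ) * eigenCoord hσ hρ X j i := by
  rw [sylvester_apply, map_add, map_smul, Matrix.add_apply, Matrix.smul_apply,
    eigenCoord_mul_left, eigenCoord_mul_right, smul_eq_mul]
  push_cast
  ring

lemma trace_conjTranspose_mul_sylvester (hσ : σ.IsHermitian) (hρ : ρ.IsHermitian) (t : ℝ)
    (X : Matrix n n ℂ) : (Xᴴ * sylvester σ ρ t X).trace.re =
      ∑ j, ∑ i, (hσ.eigenvalues j + t * hρ.eigenvalues i) *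
        Complex.normSq (eigenCoord hσ hρ X j i) := by
  rw [trace_conjTranspose_mul_eq_sum_eigenCoord hσ hρ]
  simp only [Complex.re_sum, eigenCoord_sylvester]
  refine Finset.sum_congr rfl fun j _ => Finset.sum_congr rfl fun i _ => ?_
  rw [mul_left_comm, Complex.re_ofReal_mul, Complex.star_def, ← Complex.normSq_eq_conj_mul_self,
    Complex.ofReal_re]

lemma sylvester_weight_nonneg (hσ : σ.PosSemidef) (hρ : ρ.PosSemidef) {t : ℝ} (ht : 0 ≤ t)
    (j i : n) : 0 ≤ hσ.1.eigenvalues j + t * hρ.1.eigenvalues i :=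
  add_nonneg (hσ.eigenvalues_nonneg j) (mul_nonneg ht (hρ.eigenvalues_nonneg i))

lemma trace_conjTranspose_mul_sylvester_nonneg (hσ : σ.PosSemidef) (hρ : ρ.PosSemidef) {t : ℝ}
    (ht : 0 ≤ t) (X : Matrix n n ℂ) : 0 ≤ (Xᴴ * sylvester σ ρ t X).trace.re := by
  rw [trace_conjTranspose_mul_sylvester hσ.1 hρ.1]
  exact Finset.sum_nonneg fun j _ => Finset.sum_nonneg fun i _ =>
    mul_nonneg (sylvester_weight_nonneg hσ hρ ht j i) (Complex.normSq_nonneg _)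

lemma sylvester_eq_zero_of_trace_eq_zero (hσ : σ.PosSemidef) (hρ : ρ.PosSemidef) {t : ℝ}
    (ht : 0 ≤ t) {X : Matrix n n ℂ} (h : (Xᴴ * sylvester σ ρ t X).trace.re = 0) :
    sylvester σ ρ t X = 0 := by
  have hterm (j i : n) : 0 ≤ (hσ.1.eigenvalues j + t * hρ.1.eigenvalues i) *
      Complex.normSq (eigenCoord hσ.1 hρ.1 X j i) :=
    mul_nonneg (sylvester_weight_nonneg hσ hρ ht j i) (Complex.normSq_nonneg _)
  rw [trace_conjTranspose_mul_sylvester hσ.1 hρ.1, Finset.sum_eq_zero_iff_of_nonneg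
    fun j _ => Finset.sum_nonneg fun i _ => hterm j i] at h
  refine (eigenCoord hσ.1 hρ.1).injective (Matrix.ext fun j i => ?_)
  have hji := (Finset.sum_eq_zero_iff_of_nonneg fun i _ => hterm j i).1 (h j (Finset.mem_univ j))
    i (Finset.mem_univ i)
  rw [map_zero, Matrix.zero_apply, eigenCoord_sylvester]
  rcases mul_eq_zero.1 hji with hw | hX
  · rw [hw, Complex.ofReal_zero, zero_mul]
  · rw [Complex.normSq_eq_zero.1 hX, mul_zero]

lemma trace_conjTranspose_mul_sylvester_comm (hσ : σ.IsHermitian) (hρ : ρ.IsHermitian) (t : ℝ)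
    (X Y : Matrix n n ℂ) :
    (Xᴴ * sylvester σ ρ t Y).trace.re = (Yᴴ * sylvester σ ρ t X).trace.re := by
  simp only [trace_conjTranspose_mul_eq_sum_eigenCoord hσ hρ, Complex.re_sum,
    eigenCoord_sylvester]
  refine Finset.sum_congr rfl fun j _ => Finset.sum_congr rfl fun i _ => ?_
  rw [mul_left_comm, mul_left_comm (star (eigenCoord hσ hρ Y j i)), Complex.re_ofReal_mul,
    Complex.re_ofReal_mul]
  simp only [Complex.star_def, Complex.mul_re, Complex.conj_re, Complex.conj_im]
  ring

lemma sylvesterEnergy_eq_sub (hσ : σ.IsHermitian) (hρ : ρ.IsHermitian) {t : ℝ}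
    {X : Matrix n n ℂ} (hX : sylvester σ ρ t X = ρ) (Y : Matrix n n ℂ) :
    sylvesterEnergy σ ρ t Y =
      sylvesterEnergy σ ρ t X - ((Y - X)ᴴ * sylvester σ ρ t (Y - X)).trace.re := by
  have hcross := trace_conjTranspose_mul_sylvester_comm hσ hρ t X Y
  rw [hX] at hcross
  simp only [sylvesterEnergy, conjTranspose_sub, map_sub, hX, Matrix.sub_mul, Matrix.mul_sub,
    trace_sub, Complex.sub_re]
  rw [hcross]
  ring

lemma sylvesterEnergy_of_eq {t : ℝ} {X : Matrix n n ℂ} (hX : sylvester σ ρ t X = ρ) :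
    sylvesterEnergy σ ρ t X = (Xᴴ * ρ).trace.re := by
  rw [sylvesterEnergy, hX]
  ring

lemma sylvesterEnergy_map {ι : Matrix m m ℂ →⋆ₐ[ℂ] Matrix n n ℂ} (hσ : IsMarginal ι σ σ')
    (hρ : IsMarginal ι ρ ρ') (t : ℝ) (X : Matrix m m ℂ) :
    sylvesterEnergy σ ρ t (ι X) = sylvesterEnergy σ' ρ' t X := by
  have hσX : (ι Xᴴ * (σ * ι X)).trace = (Xᴴ * (σ' * X)).trace := by
    rw [← Matrix.mul_assoc, trace_mul_comm, ← Matrix.mul_assoc, ← map_mul, hσ, Matrix.mul_assoc,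
      trace_mul_comm X, Matrix.mul_assoc]
  have hρX : (ι Xᴴ * (ι X * ρ)).trace = (Xᴴ * (X * ρ')).trace := by
    rw [← Matrix.mul_assoc, ← map_mul, hρ, Matrix.mul_assoc]
  simp only [sylvesterEnergy, sylvester_apply, conjTranspose_starAlgHom, Matrix.mul_add,
    Matrix.mul_smul, trace_add, trace_smul, hρ Xᴴ, hσX, hρX]

end Sylvester

section SylvesterSolution

variable {n : Type*} [Fintype n] [DecidableEq n] {σ ρ : Matrix n n ℂ}

lemma eigenvalues_eq_zero_of_sylvester_weight_eq_zero (hσ : σ.PosSemidef) (hρ : ρ.PosSemidef)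
    {t : ℝ} (ht : 0 < t) {j i : n} (h : hσ.1.eigenvalues j + t * hρ.1.eigenvalues i = 0) :
    hρ.1.eigenvalues i = 0 := by
  have hmul : t * hρ.1.eigenvalues i = 0 :=
    ((add_eq_zero_iff_of_nonneg (hσ.eigenvalues_nonneg j)
      (mul_nonneg ht.le (hρ.eigenvalues_nonneg i))).1 h).2
  exact (mul_eq_zero.1 hmul).resolve_left ht.ne'

lemma exists_sylvester_eq (hσ : σ.PosSemidef) (hρ : ρ.PosSemidef) {t : ℝ} (ht : 0 < t) :
    ∃ X, sylvester σ ρ t X = ρ := by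
  refine ⟨(eigenCoord hσ.1 hρ.1).symm (Matrix.of fun j i => ((hρ.1.eigenvalues i /
    (hσ.1.eigenvalues j + t * hρ.1.eigenvalues i) : ℝ) : ℂ) * eigenCoord hσ.1 hρ.1 1 j i), ?_⟩
  refine (eigenCoord hσ.1 hρ.1).injective (Matrix.ext fun j i => ?_)
  rw [eigenCoord_sylvester, eigenCoord_self, LinearEquiv.apply_symm_apply, Matrix.of_apply,
    ← mul_assoc, ← Complex.ofReal_mul, mul_comm]
  congr 2
  by_cases hw : hσ.1.eigenvalues j + t * hρ.1.eigenvalues i = 0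
  · rw [hw, zero_mul, eigenvalues_eq_zero_of_sylvester_weight_eq_zero hσ hρ ht hw]
  · exact mul_div_cancel₀ _ hw

lemma eigenCoord_of_sylvester_eq (hσ : σ.IsHermitian) (hρ : ρ.IsHermitian) {t : ℝ}
    {X : Matrix n n ℂ} (hX : sylvester σ ρ t X = ρ) {j i : n}
    (hw : hσ.eigenvalues j + t * hρ.eigenvalues i ≠ 0) :
    eigenCoord hσ hρ X j i = ((hρ.eigenvalues i /
      (hσ.eigenvalues j + t * hρ.eigenvalues i) : ℝ) : ℂ) * eigenCoord hσ hρ 1 j i := by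
  have hji := eigenCoord_sylvester hσ hρ t X j i
  rw [hX, eigenCoord_self] at hji
  refine mul_left_cancel₀ (Complex.ofReal_ne_zero.2 hw) ?_
  rw [← hji, ← mul_assoc, ← Complex.ofReal_mul, mul_div_cancel₀ _ hw, mul_comm]

lemma trace_conjTranspose_mul_of_sylvester_eq (hσ : σ.PosSemidef) (hρ : ρ.PosSemidef) {t : ℝ}
    (ht : 0 < t) {X : Matrix n n ℂ} (hX : sylvester σ ρ t X = ρ) :
    (Xᴴ * ρ).trace.re = ∑ j, ∑ i, hρ.1.eigenvalues i * eigenOverlap hσ.1 hρ.1 j i *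
      (hρ.1.eigenvalues i / (hσ.1.eigenvalues j + t * hρ.1.eigenvalues i)) := by
  rw [trace_conjTranspose_mul_eq_sum_eigenCoord hσ.1 hρ.1]
  simp only [Complex.re_sum, eigenCoord_self]
  refine Finset.sum_congr rfl fun j _ => Finset.sum_congr rfl fun i _ => ?_
  by_cases hw : hσ.1.eigenvalues j + t * hρ.1.eigenvalues i = 0
  · simp [eigenvalues_eq_zero_of_sylvester_weight_eq_zero hσ hρ ht hw]
  · rw [eigenCoord_of_sylvester_eq hσ.1 hρ.1 hX hw, eigenOverlap, Complex.normSq_apply]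
    simp only [Complex.star_def, Complex.mul_re, Complex.mul_im, Complex.conj_re, Complex.conj_im,
      Complex.ofReal_re, Complex.ofReal_im, map_mul, Complex.conj_ofReal]
    ring

/-- `t ↦ Tr ρ log(Δ + t) + Tr ρ log ρ`, where `Δ` is the relative modular operator of `σ` and `ρ`,
written in eigenbases: it interpolates between `Tr ρ log σ` at `t = 0` and, up to `Tr ρ · log t`,
`Tr ρ log ρ` at `t = ∞`. -/
noncomputable def sylvesterPotential (hσ : σ.IsHermitian) (hρ : ρ.IsHermitian) (t : ℝ) : ℝ :=
  ∑ j, ∑ i, hρ.eigenvalues i * eigenOverlap hσ hρ j i *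
    Real.log (hσ.eigenvalues j + t * hρ.eigenvalues i)

lemma hasDerivAt_sylvesterPotential (hσ : σ.PosSemidef) (hρ : ρ.PosSemidef) {t : ℝ}
    (ht : 0 < t) {X : Matrix n n ℂ} (hX : sylvester σ ρ t X = ρ) :
    HasDerivAt (sylvesterPotential hσ.1 hρ.1) (sylvesterEnergy σ ρ t X) t := by
  rw [sylvesterEnergy_of_eq hX, trace_conjTranspose_mul_of_sylvester_eq hσ hρ ht hX]
  refine HasDerivAt.fun_sum fun j _ => HasDerivAt.fun_sum fun i _ => ?_
  by_cases hw : hσ.1.eigenvalues j + t * hρ.1.eigenvalues i = 0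
  · simp [eigenvalues_eq_zero_of_sylvester_weight_eq_zero hσ hρ ht hw, hasDerivAt_const]
  · have hlin : HasDerivAt (fun s : ℝ => hσ.1.eigenvalues j + s * hρ.1.eigenvalues i)
        (hρ.1.eigenvalues i) t := by
      simpa using ((hasDerivAt_id t).mul_const (hρ.1.eigenvalues i)).const_add
        (hσ.1.eigenvalues j)
    exact (hlin.log hw).const_mul _

lemma eigenCoord_one_mul_eq_zero_of_mul_suppProj (hσ : σ.IsHermitian) (hρ : ρ.IsHermitian)
    (hsupp : ρ * suppProj σ = ρ) {j : n} (hj : hσ.eigenvalues j = 0) (i : n) :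
    eigenCoord hσ hρ 1 j i * hρ.eigenvalues i = 0 := by
  have hsupp' : suppProj σ * ρ = ρ := by
    simpa only [conjTranspose_mul, hρ.eq, suppProj, (isHermitian_cfc _ σ).eq] using
      congrArg conjTranspose hsupp
  have hji := eigenCoord_cfc_mul hσ hρ (fun x => if x = 0 then 0 else 1) ρ j i
  rw [← suppProj, hsupp', hj, if_pos rfl, Complex.ofReal_zero, zero_mul, eigenCoord_self] at hji
  exact hji

lemma tendsto_sylvesterPotential_zero (hσ : σ.IsHermitian) (hρ : ρ.IsHermitian)
    (hsupp : ρ * suppProj σ = ρ) :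
    Filter.Tendsto (sylvesterPotential hσ hρ) (nhdsWithin 0 (Set.Ioi 0))
      (nhds (ρ * cfc Real.log σ).trace.re) := by
  rw [trace_mul_cfc_left_eq_sum_eigenOverlap hσ hρ]
  refine tendsto_finsetSum _ fun j _ => tendsto_finsetSum _ fun i _ => ?_
  by_cases hj : hσ.eigenvalues j = 0
  · have hzero : hρ.eigenvalues i * eigenOverlap hσ hρ j i = 0 := by
      rcases mul_eq_zero.1 (eigenCoord_one_mul_eq_zero_of_mul_suppProj hσ hρ hsupp hj i)
        with hc | hp
      · rw [eigenOverlap, hc, map_zero, mul_zero]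
      · rw [Complex.ofReal_eq_zero.1 hp, zero_mul]
    simp only [hzero, zero_mul, tendsto_const_nhds]
  · have hcont : ContinuousAt
        (fun t : ℝ => Real.log (hσ.eigenvalues j + t * hρ.eigenvalues i)) 0 :=
      ContinuousAt.log (by fun_prop) (by simpa using hj)
    simpa using (tendsto_nhdsWithin_of_tendsto_nhds hcont.tendsto).const_mul
      (hρ.eigenvalues i * eigenOverlap hσ hρ j i)

lemma tendsto_log_add_mul_sub_log {a b : ℝ} (ha : 0 ≤ a) (hb : 0 < b) :
    Filter.Tendsto (fun t => Real.log (a + t * b) - Real.log t) Filter.atTop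
      (nhds (Real.log b)) := by
  have hquot : Filter.Tendsto (fun t : ℝ => Real.log (a / t + b)) Filter.atTop
      (nhds (Real.log b)) := by
    refine Filter.Tendsto.log ?_ hb.ne'
    simpa using (tendsto_const_nhds.div_atTop Filter.tendsto_id).add_const b
  refine hquot.congr' ?_
  filter_upwards [Filter.eventually_gt_atTop 0] with t ht
  rw [← Real.log_div (by positivity) ht.ne', add_div, mul_div_cancel_left₀ b ht.ne']

lemma tendsto_sylvesterPotential_atTop (hσ : σ.PosSemidef) (hρ : ρ.PosSemidef) :
    Filter.Tendsto (fun t => sylvesterPotential hσ.1 hρ.1 t - ρ.trace.re * Real.log t)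
      Filter.atTop (nhds (ρ * cfc Real.log ρ).trace.re) := by
  have hpot (t : ℝ) : sylvesterPotential hσ.1 hρ.1 t - ρ.trace.re * Real.log t =
      ∑ j, ∑ i, hρ.1.eigenvalues i * eigenOverlap hσ.1 hρ.1 j i *
        (Real.log (hσ.1.eigenvalues j + t * hρ.1.eigenvalues i) - Real.log t) := by
    have htr := trace_mul_eq_sum_eigenOverlap hσ.1 hρ.1 (X := 1) (x := 1) fun j i => by simp
    rw [Matrix.mul_one] at htr
    simp only [sylvesterPotential, htr, mul_sub, Finset.sum_sub_distrib, Finset.sum_mul,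
      Pi.one_apply, mul_one]
  simp only [hpot, trace_mul_cfc_right_eq_sum_eigenOverlap hσ.1 hρ.1 Real.log]
  refine tendsto_finsetSum _ fun j _ => tendsto_finsetSum _ fun i _ => ?_
  rcases (hρ.eigenvalues_nonneg i).eq_or_lt with hp | hp
  · simp [← hp]
  · exact (tendsto_log_add_mul_sub_log (hσ.eigenvalues_nonneg j) hp).const_mul _

end SylvesterSolution

section RelativeEntropy

variable {n m : Type*} [Fintype n] [DecidableEq n] [Fintype m] [DecidableEq m]
  {ι : Matrix m m ℂ →⋆ₐ[ℂ] Matrix n n ℂ} {σ ρ : Matrix n n ℂ} {σ' ρ' : Matrix m m ℂ}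

/-- The relative entropy `Tr ρ (log ρ - log σ)` in nats. Since `log 0 = 0`, it has its usual meaning
only when the support of `ρ` is contained in that of `σ`. -/
noncomputable def relEntropy (ρ σ : Matrix n n ℂ) : ℝ :=
  (ρ * cfc Real.log ρ).trace.re - (ρ * cfc Real.log σ).trace.re

lemma eq_of_monotoneOn_Ioi_of_tendsto {D : ℝ → ℝ} {a : ℝ} (hD : MonotoneOn D (Set.Ioi 0))
    (hzero : Filter.Tendsto D (nhdsWithin 0 (Set.Ioi 0)) (nhds a))
    (htop : Filter.Tendsto D Filter.atTop (nhds a)) {s : ℝ} (hs : 0 < s) : D s = a := by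
  apply le_antisymm
  · refine ge_of_tendsto htop ?_
    filter_upwards [Filter.eventually_ge_atTop s] with r hr
    exact hD hs (hs.trans_le hr) hr
  · refine le_of_tendsto hzero ?_
    filter_upwards [Ioo_mem_nhdsGT hs] with r hr
    exact hD hr.1 hs hr.2.le

lemma eq_zero_of_hasDerivAt_nonneg_of_tendsto {D D' : ℝ → ℝ} {a : ℝ}
    (hD : ∀ s, 0 < s → HasDerivAt D (D' s) s) (hD' : ∀ s, 0 < s → 0 ≤ D' s)
    (hzero : Filter.Tendsto D (nhdsWithin 0 (Set.Ioi 0)) (nhds a))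
    (htop : Filter.Tendsto D Filter.atTop (nhds a)) {t : ℝ} (ht : 0 < t) : D' t = 0 := by
  have hmono : MonotoneOn D (Set.Ioi 0) := by
    refine monotoneOn_of_hasDerivWithinAt_nonneg (f' := D') (convex_Ioi 0)
      (fun s hs => (hD s hs).continuousAt.continuousWithinAt) (fun s hs => ?_) fun s hs => ?_
    · rw [interior_Ioi] at hs
      exact (hD s hs).hasDerivWithinAt
    · rw [interior_Ioi] at hs
      exact hD' s hs
  have hconst : D =ᶠ[nhds t] fun _ => a := by
    filter_upwards [Ioi_mem_nhds ht] with s hs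
    exact eq_of_monotoneOn_Ioi_of_tendsto hmono hzero htop hs
  exact (hD t ht).unique ((hasDerivAt_const t a).congr_of_eventuallyEq hconst)

lemma sylvesterEnergy_le_of_isMarginal (hσm : IsMarginal ι σ σ') (hρm : IsMarginal ι ρ ρ')
    (hσ : σ.PosSemidef) (hρ : ρ.PosSemidef) {t : ℝ} (ht : 0 ≤ t) {X : Matrix n n ℂ}
    (hX : sylvester σ ρ t X = ρ) (Y : Matrix m m ℂ) :
    sylvesterEnergy σ' ρ' t Y ≤ sylvesterEnergy σ ρ t X := by
  rw [← sylvesterEnergy_map hσm hρm, sylvesterEnergy_eq_sub hσ.1 hρ.1 hX]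
  exact sub_le_self _ (trace_conjTranspose_mul_sylvester_nonneg hσ hρ ht _)

lemma sylvester_eq_of_sylvesterEnergy_eq (hσ : σ.PosSemidef) (hρ : ρ.PosSemidef) {t : ℝ}
    (ht : 0 ≤ t) {X Y : Matrix n n ℂ} (hX : sylvester σ ρ t X = ρ)
    (hY : sylvesterEnergy σ ρ t Y = sylvesterEnergy σ ρ t X) : sylvester σ ρ t Y = ρ := by
  rw [sylvesterEnergy_eq_sub hσ.1 hρ.1 hX, sub_eq_self] at hY
  have hdiff := sylvester_eq_zero_of_trace_eq_zero hσ hρ ht hY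
  rwa [map_sub, hX, sub_eq_zero] at hdiff

/-- The maximal energy over the smaller algebra is at most that over the larger one, so the
difference of the two potentials is monotone in `t`. Equality of the relative entropies means that
its limits at `0` and `∞` agree, which forces the two maxima to agree for every `t`. -/
lemma sylvester_map_eq_of_relEntropy_eq (hσm : IsMarginal ι σ σ') (hρm : IsMarginal ι ρ ρ')
    (hσ : σ.PosSemidef) (hρ : ρ.PosSemidef) (hσ' : σ'.PosSemidef) (hρ' : ρ'.PosSemidef)
    (hsupp : ρ * suppProj σ = ρ) (hsupp' : ρ' * suppProj σ' = ρ')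
    (hent : relEntropy ρ σ = relEntropy ρ' σ') {t : ℝ} (ht : 0 < t) {X : Matrix m m ℂ}
    (hX : sylvester σ' ρ' t X = ρ') : sylvester σ ρ t (ι X) = ρ := by
  choose! Y hY using fun s (hs : (0 : ℝ) < s) => exists_sylvester_eq hσ hρ hs
  choose! Z hZ using fun s (hs : (0 : ℝ) < s) => exists_sylvester_eq hσ' hρ' hs
  have htop : Filter.Tendsto (sylvesterPotential hσ.1 hρ.1 - sylvesterPotential hσ'.1 hρ'.1)
      Filter.atTop (nhds ((ρ * cfc Real.log ρ).trace.re - (ρ' * cfc Real.log ρ').trace.re)) := by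
    refine ((tendsto_sylvesterPotential_atTop hσ hρ).sub
      (tendsto_sylvesterPotential_atTop hσ' hρ')).congr fun s => ?_
    rw [hρm.trace_eq]
    exact sub_sub_sub_cancel_right _ _ _
  have hlimits : (ρ * cfc Real.log ρ).trace.re - (ρ' * cfc Real.log ρ').trace.re =
      (ρ * cfc Real.log σ).trace.re - (ρ' * cfc Real.log σ').trace.re := by
    rw [relEntropy, relEntropy] at hent
    linarith
  rw [hlimits] at htop
  have hgap : sylvesterEnergy σ ρ t (Y t) - sylvesterEnergy σ' ρ' t (Z t) = 0 :=
    eq_zero_of_hasDerivAt_nonneg_of_tendsto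
      (fun s hs => (hasDerivAt_sylvesterPotential hσ hρ hs (hY s hs)).sub
        (hasDerivAt_sylvesterPotential hσ' hρ' hs (hZ s hs)))
      (fun s hs => sub_nonneg.2 (sylvesterEnergy_le_of_isMarginal hσm hρm hσ hρ hs.le (hY s hs) _))
      ((tendsto_sylvesterPotential_zero hσ.1 hρ.1 hsupp).sub
        (tendsto_sylvesterPotential_zero hσ'.1 hρ'.1 hsupp')) htop ht
  refine sylvester_eq_of_sylvesterEnergy_eq hσ hρ ht.le (hY t ht) ?_
  have hmax : sylvesterEnergy σ' ρ' t X = sylvesterEnergy σ' ρ' t (Z t) := by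
    rw [sylvesterEnergy_eq_sub hσ'.1 hρ'.1 (hZ t ht) X, map_sub, hX, hZ t ht, sub_self,
      Matrix.mul_zero, trace_zero, Complex.zero_re, sub_zero]
  rw [sylvesterEnergy_map hσm hρm, hmax, sub_eq_zero.1 hgap]

end RelativeEntropy

section Interpolation

lemma eval_sum_C_mul_prod_erase {ι K : Type*} [DecidableEq ι] [Field K] (s : Finset ι)
    (a x : ι → K) {t : K} (ht : ∀ i ∈ s, x i + t ≠ 0) :
    (∑ i ∈ s, Polynomial.C (a i) * ∏ j ∈ s.erase i, (Polynomial.X + Polynomial.C (x j))).eval t =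
      (∑ i ∈ s, a i * (x i + t)⁻¹) * ∏ j ∈ s, (x j + t) := by
  simp only [Polynomial.eval_finsetSum, Polynomial.eval_mul, Polynomial.eval_C,
    Polynomial.eval_prod, Polynomial.eval_add, Polynomial.eval_X, Finset.sum_mul]
  refine Finset.sum_congr rfl fun i hi => ?_
  rw [← Finset.mul_prod_erase s _ hi, mul_assoc, inv_mul_cancel_left₀ (ht i hi)]
  simp only [add_comm t]

/-- After clearing denominators, the vanishing combination becomes a polynomial with infinitely many
roots, and evaluating it at `-x i` isolates the coefficient `a i`. -/
lemma eq_zero_of_forall_sum_mul_inv_add_eq_zero {ι : Type*} {s : Finset ι}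
    {x : ι → ℝ} (hx : ∀ i ∈ s, 0 < x i) (hinj : Set.InjOn x s) {a : ι → ℝ}
    (h : ∀ t, 0 < t → ∑ i ∈ s, a i * (x i + t)⁻¹ = 0) {i : ι} (hi : i ∈ s) : a i = 0 := by
  classical
  have hzero : ∑ i ∈ s, Polynomial.C (a i) *
      ∏ j ∈ s.erase i, (Polynomial.X + Polynomial.C (x j)) = 0 := by
    refine Polynomial.eq_zero_of_infinite_isRoot _ ((Set.Ioi_infinite (0 : ℝ)).mono fun t ht => ?_)
    change Polynomial.eval t _ = 0
    rw [eval_sum_C_mul_prod_erase s a x fun j hj => (add_pos (hx j hj) ht).ne', h t ht, zero_mul]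
  have heval := congrArg (Polynomial.eval (-x i)) hzero
  simp only [Polynomial.eval_finsetSum, Polynomial.eval_mul, Polynomial.eval_C,
    Polynomial.eval_prod, Polynomial.eval_add, Polynomial.eval_X, Polynomial.eval_zero] at heval
  rw [Finset.sum_eq_single_of_mem i hi fun j _ hji => mul_eq_zero_of_right _
    (Finset.prod_eq_zero (Finset.mem_erase.2 ⟨hji.symm, hi⟩) (neg_add_cancel _))] at heval
  refine (mul_eq_zero.1 heval).resolve_right (Finset.prod_ne_zero_iff.2 fun j hj hij => ?_)
  obtain ⟨hji, hj⟩ := Finset.mem_erase.1 hj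
  exact hji (hinj hj hi (neg_add_eq_zero.1 hij).symm)

lemma exists_sum_mul_inv_add_eq {F : Finset ℝ} (hF : ∀ r ∈ F, 0 < r) (f : ℝ → ℝ) :
    ∃ c : Set.Ioi (0 : ℝ) →₀ ℝ, ∀ r ∈ F, (c.sum fun t a => a * (r + t)⁻¹) = f r := by
  let resolvent : Set.Ioi (0 : ℝ) → F → ℝ := fun t r => ((r : ℝ) + t)⁻¹
  have htop : Submodule.span ℝ (Set.range resolvent) = ⊤ := by
    by_contra hne
    obtain ⟨φ, hφ, hker⟩ := Submodule.exists_le_ker_of_lt_top _ (lt_top_iff_ne_top.2 hne)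
    refine hφ (LinearMap.pi_ext' fun r => LinearMap.ext_ring ?_)
    refine eq_zero_of_forall_sum_mul_inv_add_eq_zero (s := Finset.univ)
      (x := fun r : F => (r : ℝ)) (a := fun r => φ (Pi.single r 1)) (fun r _ => hF r r.2)
      Subtype.val_injective.injOn (fun t ht => ?_) (Finset.mem_univ r)
    have hφt : φ (resolvent ⟨t, ht⟩) = 0 := hker (Submodule.subset_span ⟨_, rfl⟩)
    rw [LinearMap.pi_apply_eq_sum_univ] at hφt
    simp only [smul_eq_mul, mul_comm (resolvent _ _)] at hφt
    simpa only [← Pi.single_apply, Pi.single_comm] using hφt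
  obtain ⟨c, hc⟩ := Finsupp.mem_span_range_iff_exists_finsupp.1
    (htop ▸ Submodule.mem_top : (fun r : F => f r) ∈ Submodule.span ℝ (Set.range resolvent))
  refine ⟨c, fun r hr => ?_⟩
  rw [← congrFun hc ⟨r, hr⟩, Finsupp.sum, Finsupp.sum, Finset.sum_apply]
  rfl

end Interpolation

section Recovery

variable {n m : Type*} [Fintype n] [DecidableEq n] [Fintype m] [DecidableEq m]
  {ι : Matrix m m ℂ →⋆ₐ[ℂ] Matrix n n ℂ} {σ ρ : Matrix n n ℂ} {σ' ρ' : Matrix m m ℂ}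

lemma eigenCoord_sum_sylvester_solution (hσ : σ.IsHermitian) (hρ : ρ.IsHermitian)
    {X : Set.Ioi (0 : ℝ) → Matrix n n ℂ} (hX : ∀ t : Set.Ioi (0 : ℝ), sylvester σ ρ t (X t) = ρ)
    (c : Set.Ioi (0 : ℝ) →₀ ℝ) {j i : n} (hj : 0 < hσ.eigenvalues j)
    (hi : 0 ≤ hρ.eigenvalues i) :
    eigenCoord hσ hρ (c.sum fun t a => (a : ℂ) • X t) j i =
      ((c.sum fun t a => a * (hρ.eigenvalues i / (hσ.eigenvalues j + t * hρ.eigenvalues i)) : ℝ) :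
        ℂ) * eigenCoord hσ hρ 1 j i := by
  simp only [Finsupp.sum, map_sum, map_smul, Matrix.sum_apply, Matrix.smul_apply, smul_eq_mul,
    Complex.ofReal_sum, Finset.sum_mul, Complex.ofReal_mul, mul_assoc]
  refine Finset.sum_congr rfl fun t _ => ?_
  have ht : (0 : ℝ) < t := t.2
  rw [eigenCoord_of_sylvester_eq hσ hρ (hX t) (by positivity)]

/-- In eigenbases the Sylvester solutions act as `1 / (q / p + t)`, so coefficients interpolating
`r ↦ r ^ (-1/2)` at the eigenvalue ratios `q / p` combine them into `√(p / q)`. -/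
lemma cfc_sqrt_mul_sum_sylvester_solution (hσ : σ.PosSemidef) (hρ : ρ.PosSemidef)
    (hsupp : ρ * suppProj σ = ρ) {X : Set.Ioi (0 : ℝ) → Matrix n n ℂ}
    (hX : ∀ t : Set.Ioi (0 : ℝ), sylvester σ ρ t (X t) = ρ) {c : Set.Ioi (0 : ℝ) →₀ ℝ}
    (hc : ∀ j i, 0 < hσ.1.eigenvalues j → 0 < hρ.1.eigenvalues i →
      (c.sum fun t a => a * (hσ.1.eigenvalues j / hρ.1.eigenvalues i + t)⁻¹) =
        √(hσ.1.eigenvalues j / hρ.1.eigenvalues i)⁻¹) :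
    cfc Real.sqrt σ * (c.sum fun t a => (a : ℂ) • X t) = cfc Real.sqrt ρ := by
  refine (eigenCoord hσ.1 hρ.1).injective (Matrix.ext fun j i => ?_)
  rw [eigenCoord_cfc_mul, eigenCoord_cfc]
  rcases (hσ.eigenvalues_nonneg j).eq_or_lt with hj | hj
  · rcases mul_eq_zero.1 (eigenCoord_one_mul_eq_zero_of_mul_suppProj hσ.1 hρ.1 hsupp hj.symm i)
      with hcoord | hp
    · simp [← hj, hcoord]
    · simp [← hj, Complex.ofReal_eq_zero.1 hp]
  · rw [eigenCoord_sum_sylvester_solution hσ.1 hρ.1 hX c hj (hρ.eigenvalues_nonneg i),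
      mul_comm _ (eigenCoord hσ.1 hρ.1 1 j i), mul_left_comm, ← Complex.ofReal_mul]
    congr 2
    rcases (hρ.eigenvalues_nonneg i).eq_or_lt with hi | hi
    · simp [← hi]
    · have hratio (t : Set.Ioi (0 : ℝ)) : hρ.1.eigenvalues i /
          (hσ.1.eigenvalues j + t * hρ.1.eigenvalues i) =
            (hσ.1.eigenvalues j / hρ.1.eigenvalues i + t)⁻¹ := by
        rw [← inv_div, add_div, mul_div_cancel_right₀ _ hi.ne']
      simp only [hratio, hc j i hj hi]
      rw [inv_div, ← Real.sqrt_mul hj.le, mul_div_cancel₀ _ hj.ne']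

lemma exists_sqrt_intertwiner_of_relEntropy_eq (hσm : IsMarginal ι σ σ') (hρm : IsMarginal ι ρ ρ')
    (hσ : σ.PosSemidef) (hρ : ρ.PosSemidef) (hσ' : σ'.PosSemidef) (hρ' : ρ'.PosSemidef)
    (hsupp : ρ * suppProj σ = ρ) (hsupp' : ρ' * suppProj σ' = ρ')
    (hent : relEntropy ρ σ = relEntropy ρ' σ') :
    ∃ Y, cfc Real.sqrt σ' * Y = cfc Real.sqrt ρ' ∧ cfc Real.sqrt σ * ι Y = cfc Real.sqrt ρ := by
  choose X hX using fun t : Set.Ioi (0 : ℝ) => exists_sylvester_eq hσ' hρ' t.2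
  let ratios : Finset ℝ :=
    (Finset.univ.image fun x : n × n => hσ.1.eigenvalues x.1 / hρ.1.eigenvalues x.2) ∪
      Finset.univ.image fun x : m × m => hσ'.1.eigenvalues x.1 / hρ'.1.eigenvalues x.2
  obtain ⟨c, hc⟩ := exists_sum_mul_inv_add_eq (F := ratios.filter (0 < ·))
    (fun r hr => (Finset.mem_filter.1 hr).2) fun r => √r⁻¹
  refine ⟨c.sum fun t a => (a : ℂ) • X t, ?_, ?_⟩
  · exact cfc_sqrt_mul_sum_sylvester_solution hσ' hρ' hsupp' hX fun j i hj hi =>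
      hc _ (Finset.mem_filter.2 ⟨Finset.mem_union_right _
        (Finset.mem_image_of_mem _ (Finset.mem_univ (j, i))), div_pos hj hi⟩)
  · simp only [Finsupp.sum, map_sum, map_smul]
    exact cfc_sqrt_mul_sum_sylvester_solution hσ hρ hsupp
      (fun t => sylvester_map_eq_of_relEntropy_eq hσm hρm hσ hρ hσ' hρ' hsupp hsupp' hent t.2
        (hX t))
      fun j i hj hi => hc _ (Finset.mem_filter.2 ⟨Finset.mem_union_left _
        (Finset.mem_image_of_mem _ (Finset.mem_univ (j, i))), div_pos hj hi⟩)

/-- The Petz recovery map `τ ↦ √σ ι(σ'^(-1/2) τ σ'^(-1/2)) √σ` of the embedding `ι`, for a matrix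
`σ` with marginal `σ'`. -/
noncomputable def petzMap (ι : Matrix m m ℂ →⋆ₐ[ℂ] Matrix n n ℂ) (σ : Matrix n n ℂ)
    (σ' : Matrix m m ℂ) : Matrix m m ℂ →ₗ[ℂ] Matrix n n ℂ :=
  LinearMap.mulLeftRight ℂ (cfc Real.sqrt σ, cfc Real.sqrt σ) ∘ₗ ι.toAlgHom.toLinearMap ∘ₗ
    LinearMap.mulLeftRight ℂ (pinvSqrt σ', pinvSqrt σ')

lemma petzMap_apply (ι : Matrix m m ℂ →⋆ₐ[ℂ] Matrix n n ℂ) (σ : Matrix n n ℂ)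
    (σ' τ : Matrix m m ℂ) :
    petzMap ι σ σ' τ = cfc Real.sqrt σ * ι (pinvSqrt σ' * τ * pinvSqrt σ') * cfc Real.sqrt σ := rfl

lemma petzMap_self_mul_conjTranspose (ι : Matrix m m ℂ →⋆ₐ[ℂ] Matrix n n ℂ) (σ : Matrix n n ℂ)
    (σ' F : Matrix m m ℂ) : petzMap ι σ σ' (F * Fᴴ) =
      (cfc Real.sqrt σ * ι (pinvSqrt σ' * F)) * (cfc Real.sqrt σ * ι (pinvSqrt σ' * F))ᴴ := by
  simp only [petzMap_apply, conjTranspose_mul, conjTranspose_starAlgHom, (isHermitian_cfc _ σ).eq,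
    pinvSqrt, (isHermitian_cfc _ σ').eq, map_mul, Matrix.mul_assoc]

lemma posSemidef_petzMap (ι : Matrix m m ℂ →⋆ₐ[ℂ] Matrix n n ℂ) (σ : Matrix n n ℂ)
    (σ' : Matrix m m ℂ) {τ : Matrix m m ℂ} (hτ : τ.PosSemidef) : (petzMap ι σ σ' τ).PosSemidef := by
  have hsqrt := petzMap_self_mul_conjTranspose ι σ σ' (cfc Real.sqrt τ)
  rw [(isHermitian_cfc _ τ).eq, cfc_sqrt_mul_cfc_sqrt hτ] at hsqrt
  rw [hsqrt]
  exact posSemidef_self_mul_conjTranspose _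

lemma petzMap_eq_of_relEntropy_eq (hσm : IsMarginal ι σ σ') (hρm : IsMarginal ι ρ ρ')
    (hσ : σ.PosSemidef) (hρ : ρ.PosSemidef) (hσ' : σ'.PosSemidef) (hρ' : ρ'.PosSemidef)
    (hsupp : ρ * suppProj σ = ρ) (hsupp' : ρ' * suppProj σ' = ρ')
    (hent : relEntropy ρ σ = relEntropy ρ' σ') : petzMap ι σ σ' ρ' = ρ := by
  obtain ⟨Y, hY', hY⟩ :=
    exists_sqrt_intertwiner_of_relEntropy_eq hσm hρm hσ hρ hσ' hρ' hsupp hsupp' hent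
  have hsqrt : cfc Real.sqrt σ * ι (pinvSqrt σ' * cfc Real.sqrt ρ') = cfc Real.sqrt ρ := by
    rw [← hY', ← Matrix.mul_assoc, pinvSqrt_mul_cfc_sqrt hσ', map_mul, ← Matrix.mul_assoc,
      cfc_sqrt_mul_eq_of_mul_eq hσ (hσm.mul_map_suppProj hσ hσ'.1), hY]
  have hpetz := petzMap_self_mul_conjTranspose ι σ σ' (cfc Real.sqrt ρ')
  rwa [(isHermitian_cfc _ ρ').eq, cfc_sqrt_mul_cfc_sqrt hρ', hsqrt, (isHermitian_cfc _ ρ).eq,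
    cfc_sqrt_mul_cfc_sqrt hρ] at hpetz

lemma trace_map_mul_petzMap (hσm : IsMarginal ι σ σ') (hσ : σ.PosSemidef) (hσ' : σ'.PosSemidef)
    {W τ : Matrix m m ℂ} (hW : Commute (ι W) σ) (hW' : Commute W σ')
    (hτ : τ * suppProj σ' = τ) :
    (ι W * petzMap ι σ σ' τ).trace = (W * τ).trace := by
  have hsqrt : ι W * cfc Real.sqrt σ = cfc Real.sqrt σ * ι W := (hW.symm.cfc_real _).symm
  have hpinv : W * pinvSqrt σ' = pinvSqrt σ' * W := (hW'.symm.cfc_real _).symm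
  calc (ι W * petzMap ι σ σ' τ).trace
      = (ι (W * (pinvSqrt σ' * τ * pinvSqrt σ')) * σ).trace := by
        rw [petzMap_apply, ← Matrix.mul_assoc, ← Matrix.mul_assoc, hsqrt, Matrix.mul_assoc,
          Matrix.mul_assoc, trace_mul_comm, Matrix.mul_assoc, Matrix.mul_assoc,
          cfc_sqrt_mul_cfc_sqrt hσ, ← Matrix.mul_assoc, ← map_mul]
    _ = (pinvSqrt σ' * (W * τ) * pinvSqrt σ' * σ').trace := by
        rw [hσm, ← Matrix.mul_assoc, ← Matrix.mul_assoc, hpinv, Matrix.mul_assoc (pinvSqrt σ')]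
    _ = (W * τ * suppProj σ').trace := by
        rw [← pinvSqrt_mul_self_mul_pinvSqrt hσ', Matrix.mul_assoc, Matrix.mul_assoc,
          trace_mul_comm]
        simp only [Matrix.mul_assoc]
    _ = (W * τ).trace := by rw [Matrix.mul_assoc, hτ]

end Recovery

section ConvexHull

variable {E : Type*} [AddCommGroup E] [Module ℝ E] [FiniteDimensional ℝ E] {s : Set E} {x : E}

lemma exists_stdSimplex_sum_eq_of_mem_convexHull {κ : Type*} [Fintype κ]
    (hκ : Module.finrank ℝ E + 1 ≤ Fintype.card κ) (hx : x ∈ convexHull ℝ s) :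
    ∃ w ∈ stdSimplex ℝ κ, ∃ z : κ → E, (∀ k, z k ∈ s) ∧ ∑ k, w k • z k = x := by
  obtain ⟨x₀, hx₀⟩ := convexHull_nonempty_iff.1 ⟨x, hx⟩
  obtain ⟨ι, _, z, w, hz, hind, hw, hw1, rfl⟩ := eq_pos_convex_span_of_mem_convexHull hx
  obtain ⟨g⟩ := Function.Embedding.nonempty_of_card_le
    ((hind.card_le_finrank_succ.trans (Nat.succ_le_succ (Submodule.finrank_le _))).trans hκ)
  have hwg (i : ι) : Function.extend g w 0 (g i) = w i := g.injective.extend_apply w 0 i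
  have hzg (i : ι) : Function.extend g z (fun _ => x₀) (g i) = z i := g.injective.extend_apply z _ i
  have hw0 {k : κ} (hk : k ∉ Set.range g) : Function.extend g w 0 k = 0 :=
    Function.extend_apply' _ _ _ hk
  refine ⟨Function.extend g w 0, ⟨fun k => ?_, ?_⟩, Function.extend g z fun _ => x₀,
    fun k => ?_, ?_⟩
  · by_cases hk : k ∈ Set.range g
    · obtain ⟨i, rfl⟩ := hk
      exact (hw i).le.trans_eq (hwg i).symm
    · exact (hw0 hk).ge
  · rw [← hw1]
    exact (Fintype.sum_of_injective g g.injective w _ (fun _ => hw0) fun i => (hwg i).symm).symm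
  · by_cases hk : k ∈ Set.range g
    · obtain ⟨i, rfl⟩ := hk
      rw [hzg]
      exact hz ⟨i, rfl⟩
    · rwa [Function.extend_apply' z _ k hk]
  · refine (Fintype.sum_of_injective g g.injective _ _ (fun k hk => ?_) fun i => ?_).symm
    · rw [hw0 hk, zero_smul]
    · rw [hwg, hzg]

variable [TopologicalSpace E] [ContinuousAdd E] [ContinuousSMul ℝ E]

lemma isCompact_convexHull_of_isCompact (hs : IsCompact s) : IsCompact (convexHull ℝ s) := by
  let κ := Fin (Module.finrank ℝ E + 1)
  have himage : convexHull ℝ s = (fun wz : (κ → ℝ) × (κ → E) => ∑ k, wz.1 k • wz.2 k) ''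
      (stdSimplex ℝ κ ×ˢ Set.univ.pi fun _ => s) := by
    apply Set.Subset.antisymm
    · intro x hx
      obtain ⟨w, hw, z, hz, rfl⟩ :=
        exists_stdSimplex_sum_eq_of_mem_convexHull (Fintype.card_fin _).ge hx
      exact ⟨(w, z), ⟨hw, fun k _ => hz k⟩, rfl⟩
    · rintro _ ⟨⟨w, z⟩, ⟨⟨hw0, hw1⟩, hz⟩, rfl⟩
      exact mem_convexHull_of_exists_fintype w z hw0 hw1 (fun k => hz k trivial) rfl
  rw [himage]
  exact ((isCompact_stdSimplex ℝ κ).prod (isCompact_univ_pi fun _ => hs)).image (by fun_prop)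

/- The averages of `g` over the decompositions of `x` form the fibre over `x` of the convex hull of
the graph of `g`. -/
lemma exists_max_average_of_isCompact [T1Space E] (hs : IsCompact s) {g : E → ℝ} (hg : Continuous g)
    (hx : x ∈ s) :
    ∃ (ι : Type) (_ : Fintype ι), ∃ w ∈ stdSimplex ℝ ι, ∃ z : ι → E, (∀ i, z i ∈ s) ∧
      ∑ i, w i • z i = x ∧ ∀ (κ : Type) [Fintype κ], ∀ v ∈ stdSimplex ℝ κ, ∀ y : κ → E,
        (∀ k, y k ∈ s) → ∑ k, v k • y k = x → ∑ k, v k * g (y k) ≤ ∑ i, w i * g (z i) := by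
  let graph (z : E) : E × ℝ := (z, g z)
  have hK : IsCompact (convexHull ℝ (graph '' s) ∩ Prod.fst ⁻¹' {x}) :=
    (isCompact_convexHull_of_isCompact (hs.image (by fun_prop))).inter_right
      (isClosed_singleton.preimage continuous_fst)
  obtain ⟨⟨x', M⟩, ⟨hM, hx'⟩, hmax⟩ := hK.exists_isMaxOn
    ⟨graph x, subset_convexHull ℝ _ ⟨x, hx, rfl⟩, rfl⟩ continuous_snd.continuousOn
  obtain rfl : x' = x := hx'
  have hsum {κ : Type} [Fintype κ] (v : κ → ℝ) (y : κ → E) :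
      ∑ k, v k • graph (y k) = (∑ k, v k • y k, ∑ k, v k * g (y k)) :=
    Prod.ext (by rw [Prod.fst_sum]; rfl) (by rw [Prod.snd_sum]; rfl)
  obtain ⟨w, hw, z, hz, hwz⟩ := exists_stdSimplex_sum_eq_of_mem_convexHull
    (κ := Fin (Module.finrank ℝ (E × ℝ) + 1)) (Fintype.card_fin _).ge hM
  choose z' hz' hzz' using hz
  obtain rfl : z = fun i => graph (z' i) := funext fun i => (hzz' i).symm
  rw [hsum, Prod.mk.injEq] at hwz
  refine ⟨_, inferInstance, w, hw, z', hz', hwz.1, fun κ _ v hv y hy hvy => ?_⟩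
  rw [hwz.2]
  refine hmax (a := (x', ∑ k, v k * g (y k))) ⟨?_, rfl⟩
  exact mem_convexHull_of_exists_fintype v (fun k => graph (y k)) hv.1 hv.2
    (fun k => ⟨y k, hy k, rfl⟩) (by rw [hsum, hvy])

end ConvexHull

section Perspective

variable {V : Type*} [NormedAddCommGroup V] [InnerProductSpace ℝ V]

lemma norm_sq_div_add_norm_sq_div {α β : ℝ} (hα : 0 < α) (hβ : 0 < β) (a b : V) :
    ‖a‖ ^ 2 / α + ‖b‖ ^ 2 / β =
      ‖a + b‖ ^ 2 / (α + β) + ‖β • a - α • b‖ ^ 2 / (α * β * (α + β)) := by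
  have hαβ : α + β ≠ 0 := (add_pos hα hβ).ne'
  rw [norm_add_sq_real, norm_sub_sq_real, norm_smul, norm_smul, real_inner_smul_left,
    real_inner_smul_right, Real.norm_of_nonneg hα.le, Real.norm_of_nonneg hβ.le]
  field_simp
  ring

variable {α β : ℝ} {a b : V}

lemma norm_add_sq_div_add_le (hα : 0 ≤ α) (hβ : 0 ≤ β) (ha : α = 0 → a = 0) (hb : β = 0 → b = 0) :
    ‖a + b‖ ^ 2 / (α + β) ≤ ‖a‖ ^ 2 / α + ‖b‖ ^ 2 / β := by
  rcases hα.eq_or_lt with rfl | hα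
  · simp [ha rfl]
  rcases hβ.eq_or_lt with rfl | hβ
  · simp [hb rfl]
  rw [norm_sq_div_add_norm_sq_div hα hβ]
  exact le_add_of_nonneg_right (by positivity)

lemma add_smul_eq_smul_add_of_norm_sq_div_le (hα : 0 ≤ α) (hβ : 0 ≤ β) (ha : α = 0 → a = 0)
    (hb : β = 0 → b = 0) (h : ‖a‖ ^ 2 / α + ‖b‖ ^ 2 / β ≤ ‖a + b‖ ^ 2 / (α + β)) :
    (α + β) • a = α • (a + b) := by
  rcases hα.eq_or_lt with rfl | hα
  · simp [ha rfl]
  rcases hβ.eq_or_lt with rfl | hβ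
  · simp [hb rfl]
  rw [norm_sq_div_add_norm_sq_div hα hβ, add_le_iff_nonpos_right] at h
  have hpos : 0 < α * β * (α + β) := by positivity
  have hzero : ‖β • a - α • b‖ ^ 2 ≤ 0 := by simpa using (div_le_iff₀ hpos).1 h
  have heq : β • a = α • b :=
    sub_eq_zero.1 (norm_eq_zero.1 (pow_eq_zero_iff two_ne_zero |>.1 (hzero.antisymm (sq_nonneg _))))
  rw [add_smul, smul_add, heq]

end Perspective

section Decomposition

variable {n : Type*}

/-- The family `θ` is a decomposition of `ρ` into an ensemble of unnormalised states; the weight of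
each member is its trace. -/
def IsDecomposition {κ : Type*} [Fintype κ] (ρ : Matrix n n ℂ) (θ : κ → Matrix n n ℂ) : Prop :=
  (∀ k, (θ k).PosSemidef) ∧ ∑ k, θ k = ρ

lemma IsDecomposition.posSemidef_sub {κ : Type*} [Fintype κ] {ρ : Matrix n n ℂ}
    {θ : κ → Matrix n n ℂ} (h : IsDecomposition ρ θ) (k : κ) : (ρ - θ k).PosSemidef := by
  classical
  rw [← h.2, ← Finset.sum_erase_eq_sub (Finset.mem_univ k)]
  exact posSemidef_sum _ fun j _ => h.1 j

variable [Fintype n]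

lemma ofReal_re_trace_of_posSemidef {θ : Matrix n n ℂ} (hθ : θ.PosSemidef) :
    (θ.trace.re : ℂ) = θ.trace :=
  (Complex.eq_re_of_ofReal_le (r := 0) (by simpa using hθ.trace_nonneg)).symm

lemma re_trace_nonneg_of_posSemidef {θ : Matrix n n ℂ} (hθ : θ.PosSemidef) : 0 ≤ θ.trace.re :=
  (Complex.nonneg_iff.1 hθ.trace_nonneg).1

lemma trace_conjTranspose_mul_self_eq_norm_sq (v : EuclideanSpace ℂ (n × n)) :
    ((of fun i j => v (i, j))ᴴ * of fun i j => v (i, j)).trace = ((‖v‖ ^ 2 : ℝ) : ℂ) := by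
  simp only [EuclideanSpace.norm_sq_eq, Fintype.sum_prod_type, Complex.ofReal_sum, trace,
    diag_apply, Matrix.mul_apply, conjTranspose_apply, of_apply]
  rw [Finset.sum_comm]
  simp only [Complex.star_def, Complex.conj_mul', Complex.ofReal_pow]

lemma eq_zero_of_re_trace_eq_zero {θ : Matrix n n ℂ} (hθ : θ.PosSemidef) (h : θ.trace.re = 0) :
    θ = 0 := by
  rw [← hθ.trace_eq_zero_iff, ← ofReal_re_trace_of_posSemidef hθ, h, Complex.ofReal_zero]

variable [DecidableEq n] {ρ : Matrix n n ℂ}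

lemma exists_isState_smul_eq {θ : Matrix n n ℂ} (hθ : θ.PosSemidef) (hρ : IsState ρ) :
    ∃ τ, IsState τ ∧ θ.trace.re • τ = θ := by
  by_cases h : θ.trace.re = 0
  · exact ⟨ρ, hρ, by rw [h, zero_smul, eq_zero_of_re_trace_eq_zero hθ h]⟩
  · refine ⟨θ.trace.re⁻¹ • θ, ⟨hθ.smul (inv_nonneg.2 (re_trace_nonneg_of_posSemidef hθ)), ?_⟩, ?_⟩
    · rw [trace_smul, Complex.real_smul, ← ofReal_re_trace_of_posSemidef hθ, ← Complex.ofReal_mul,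
        Complex.ofReal_re, inv_mul_cancel₀ h, Complex.ofReal_one]
    · rw [smul_smul, mul_inv_cancel₀ h, one_smul]

lemma isCompact_setOf_isState : IsCompact {M : Matrix n n ℂ | IsState M} := by
  let square (v : EuclideanSpace ℂ (n × n)) : Matrix n n ℂ :=
    (of fun i j => v (i, j))ᴴ * of fun i j => v (i, j)
  have himage : {M : Matrix n n ℂ | IsState M} = square '' Metric.sphere 0 1 := by
    apply Set.Subset.antisymm
    · rintro M ⟨hM, htr⟩
      obtain ⟨F, rfl⟩ := exists_conjTranspose_mul_self_eq hM
      refine ⟨WithLp.toLp 2 fun ij => F ij.1 ij.2, ?_, rfl⟩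
      have hnorm := (trace_conjTranspose_mul_self_eq_norm_sq
        (WithLp.toLp 2 fun ij : n × n => F ij.1 ij.2)).symm.trans htr
      rw [mem_sphere_zero_iff_norm, ← pow_eq_one_iff_of_nonneg (norm_nonneg _) two_ne_zero]
      exact_mod_cast hnorm
    · rintro _ ⟨v, hv, rfl⟩
      refine ⟨posSemidef_conjTranspose_mul_self _, ?_⟩
      rw [trace_conjTranspose_mul_self_eq_norm_sq, mem_sphere_zero_iff_norm.1 hv, one_pow,
        Complex.ofReal_one]
  rw [himage]
  exact (isCompact_sphere 0 1).image (by fun_prop)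

variable {V : Type*} [NormedAddCommGroup V] [InnerProductSpace ℝ V] (T : Matrix n n ℂ →ₗ[ℝ] V)

/-- The average of `‖T τ‖²` over the ensemble `θ`. Zero members contribute `0 / 0 = 0`. -/
noncomputable def averageNormSq {κ : Type*} [Fintype κ] (θ : κ → Matrix n n ℂ) : ℝ :=
  ∑ k, ‖T (θ k)‖ ^ 2 / (θ k).trace.re

lemma averageNormSq_smul_of_isState {κ : Type*} [Fintype κ] (w : κ → ℝ) {τ : κ → Matrix n n ℂ}
    (hτ : ∀ k, IsState (τ k)) :
    averageNormSq T (fun k => w k • τ k) = ∑ k, w k * ‖T (τ k)‖ ^ 2 := by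
  refine Finset.sum_congr rfl fun k _ => ?_
  rw [map_smul, norm_smul, trace_smul, (hτ k).2, Complex.real_smul, mul_one, Complex.ofReal_re,
    mul_pow, Real.norm_eq_abs, sq_abs]
  by_cases h : w k = 0
  · simp [h]
  · field_simp

lemma exists_max_averageNormSq (hρ : IsState ρ) :
    ∃ (κ : Type) (_ : Fintype κ) (θ : κ → Matrix n n ℂ), IsDecomposition ρ θ ∧
      ∀ (μ : Type) [Fintype μ] (χ : μ → Matrix n n ℂ), IsDecomposition ρ χ →
        averageNormSq T χ ≤ averageNormSq T θ := by
  have hT : Continuous fun τ => ‖T τ‖ ^ 2 :=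
    (T.continuous_of_finiteDimensional.norm).pow 2
  obtain ⟨κ, _, w, hw, τ, hτ, hsum, hmax⟩ :=
    exists_max_average_of_isCompact isCompact_setOf_isState hT hρ
  refine ⟨κ, inferInstance, fun k => w k • τ k, ⟨fun k => (hτ k).1.smul (hw.1 k), hsum⟩,
    fun μ _ χ hχ => ?_⟩
  choose y hy hyχ using fun k => exists_isState_smul_eq (hχ.1 k) hρ
  have hweight : (fun k => (χ k).trace.re) ∈ stdSimplex ℝ μ := by
    refine ⟨fun k => re_trace_nonneg_of_posSemidef (hχ.1 k), ?_⟩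
    rw [← Complex.re_sum, ← trace_sum, hχ.2, hρ.2, Complex.one_re]
  rw [averageNormSq_smul_of_isState T w hτ, ← funext hyχ, averageNormSq_smul_of_isState T _ hy]
  exact hmax μ _ hweight y hy (by simp only [hyχ, hχ.2])

end Decomposition

section Rigidity

variable {n : Type*} [Fintype n]

lemma smul_map_eq_of_averageNormSq_le {V : Type*} [NormedAddCommGroup V] [InnerProductSpace ℝ V]
    (T : Matrix n n ℂ →ₗ[ℝ] V) {κ : Type*} [Fintype κ] {θ χ₁ χ₂ : κ → Matrix n n ℂ}
    (h₁ : ∀ k, (χ₁ k).PosSemidef) (h₂ : ∀ k, (χ₂ k).PosSemidef)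
    (hT : ∀ k, T (χ₁ k + χ₂ k) = T (θ k)) (htr : ∀ k, (χ₁ k + χ₂ k).trace = (θ k).trace)
    (hle : averageNormSq T (Sum.elim χ₁ χ₂) ≤ averageNormSq T θ) (k : κ) :
    (θ k).trace.re • T (χ₁ k) = (χ₁ k).trace.re • T (θ k) := by
  have hzero {τ : Matrix n n ℂ} (hτ : τ.PosSemidef) (h : τ.trace.re = 0) : T τ = 0 := by
    rw [eq_zero_of_re_trace_eq_zero hτ h, map_zero]
  have hmem (k : κ) := norm_add_sq_div_add_le (re_trace_nonneg_of_posSemidef (h₁ k))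
    (re_trace_nonneg_of_posSemidef (h₂ k)) (hzero (h₁ k)) (hzero (h₂ k))
  have hmem_eq := add_smul_eq_smul_add_of_norm_sq_div_le (re_trace_nonneg_of_posSemidef (h₁ k))
    (re_trace_nonneg_of_posSemidef (h₂ k)) (hzero (h₁ k)) (hzero (h₂ k))
  simp only [← map_add, hT, ← Complex.add_re, ← trace_add, htr] at hmem hmem_eq
  refine hmem_eq (le_of_not_gt fun hlt => hle.not_gt ?_)
  rw [averageNormSq, averageNormSq, Fintype.sum_sum_type, ← Finset.sum_add_distrib]
  exact Finset.sum_lt_sum (fun j _ => hmem j) ⟨k, Finset.mem_univ k, hlt⟩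

lemma exists_decomposition_forall_refinement_smul_map_eq [DecidableEq n] {V : Type*}
    [AddCommGroup V] [Module ℝ V] [FiniteDimensional ℝ V] (T : Matrix n n ℂ →ₗ[ℝ] V)
    {ρ : Matrix n n ℂ} (hρ : IsState ρ) :
    ∃ (κ : Type) (_ : Fintype κ) (θ : κ → Matrix n n ℂ), IsDecomposition ρ θ ∧
      ∀ χ₁ χ₂ : κ → Matrix n n ℂ, IsDecomposition ρ (Sum.elim χ₁ χ₂) →
        (∀ k, T (χ₁ k + χ₂ k) = T (θ k)) → (∀ k, (χ₁ k + χ₂ k).trace = (θ k).trace) →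
        ∀ k, (θ k).trace.re • T (χ₁ k) = (χ₁ k).trace.re • T (θ k) := by
  let e : V ≃ₗ[ℝ] EuclideanSpace ℝ (Fin (Module.finrank ℝ V)) :=
    (Module.finBasis ℝ V).equivFun.trans (WithLp.linearEquiv 2 ℝ _).symm
  obtain ⟨κ, _, θ, hθ, hmax⟩ := exists_max_averageNormSq (e.toLinearMap ∘ₗ T) hρ
  refine ⟨κ, inferInstance, θ, hθ, fun χ₁ χ₂ hχ hT htr k => e.injective ?_⟩
  rw [map_smul, map_smul]
  exact smul_map_eq_of_averageNormSq_le (e.toLinearMap ∘ₗ T) (fun k => hχ.1 (Sum.inl k))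
    (fun k => hχ.1 (Sum.inr k)) (fun k => congrArg e (hT k)) htr (hmax _ _ hχ) k

end Rigidity

section PartialTrace

variable {K L : Type*}

/-- The partial trace over the second factor. -/
def traceRight [Fintype L] : Matrix (K × L) (K × L) ℂ →ₗ[ℂ] Matrix K K ℂ where
  toFun M := of fun k k' => ∑ l, M (k, l) (k', l)
  map_add' M N := by ext; simp [Finset.sum_add_distrib]
  map_smul' r M := by ext; simp [Finset.mul_sum]

lemma traceRight_apply [Fintype L] (M : Matrix (K × L) (K × L) ℂ) (k k' : K) :
    traceRight M k k' = ∑ l, M (k, l) (k', l) := rfl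

lemma posSemidef_traceRight [Fintype L] {M : Matrix (K × L) (K × L) ℂ} (hM : M.PosSemidef) :
    (traceRight M).PosSemidef := by
  have hsum : traceRight M = ∑ l, M.submatrix (·, l) (·, l) := by
    ext k k'
    simp only [traceRight_apply, Matrix.sum_apply, submatrix_apply]
  rw [hsum]
  exact posSemidef_sum _ fun l _ => hM.submatrix _

/-- The partial trace over the first factor. -/
def traceLeft [Fintype K] (M : Matrix (K × L) (K × L) ℂ) : Matrix L L ℂ :=
  traceRight (M.submatrix Prod.swap Prod.swap)

lemma traceLeft_apply [Fintype K] (M : Matrix (K × L) (K × L) ℂ) (l l' : L) :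
    traceLeft M l l' = ∑ k, M (k, l) (k, l') := rfl

lemma posSemidef_traceLeft [Fintype K] {M : Matrix (K × L) (K × L) ℂ} (hM : M.PosSemidef) :
    (traceLeft M).PosSemidef :=
  posSemidef_traceRight (hM.submatrix _)

variable [Fintype K] [Fintype L]

lemma trace_traceRight (M : Matrix (K × L) (K × L) ℂ) : (traceRight M).trace = M.trace := by
  simp only [trace, diag_apply, traceRight_apply, Fintype.sum_prod_type]

lemma trace_traceLeft (M : Matrix (K × L) (K × L) ℂ) : (traceLeft M).trace = M.trace := by
  simp only [trace, diag_apply, traceLeft_apply, Fintype.sum_prod_type_right]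

variable [DecidableEq K]

lemma one_kronecker_mul_apply (E : Matrix L L ℂ) (M : Matrix (K × L) (K × L) ℂ) (k : K) (l : L)
    (x : K × L) :
    ((1 ⊗ₖ E : Matrix (K × L) (K × L) ℂ) * M) (k, l) x = ∑ l', E l l' * M (k, l') x := by
  simp [Matrix.mul_apply, kroneckerMap_apply, Fintype.sum_prod_type, Matrix.one_apply]

lemma mul_one_kronecker_apply (E : Matrix L L ℂ) (M : Matrix (K × L) (K × L) ℂ) (k : K) (l : L)
    (x : K × L) :
    (M * (1 ⊗ₖ E : Matrix (K × L) (K × L) ℂ)) x (k, l) = ∑ l', M x (k, l') * E l' l := by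
  simp [Matrix.mul_apply, kroneckerMap_apply, Fintype.sum_prod_type, Matrix.one_apply]

lemma traceRight_one_kronecker_mul_comm (E : Matrix L L ℂ) (M : Matrix (K × L) (K × L) ℂ) :
    traceRight ((1 ⊗ₖ E) * M) = traceRight (M * (1 ⊗ₖ E)) := by
  ext k k'
  simp only [traceRight_apply, one_kronecker_mul_apply, mul_one_kronecker_apply]
  rw [Finset.sum_comm]
  simp only [mul_comm]

/-- The unnormalised state of the first factor of `M` conditioned on the outcome `E` of a
measurement of the second factor. -/
noncomputable def condState :
    Matrix L L ℂ →ₗ[ℂ] Matrix (K × L) (K × L) ℂ →ₗ[ℂ] Matrix K K ℂ :=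
  LinearMap.mk₂ ℂ (fun E M => traceRight ((1 ⊗ₖ E) * M))
    (fun E F M => by rw [kronecker_add, Matrix.add_mul, map_add])
    (fun r E M => by rw [kronecker_smul, Matrix.smul_mul, map_smul])
    (fun E M N => by rw [Matrix.mul_add, map_add])
    (fun r E M => by rw [Matrix.mul_smul, map_smul])

lemma condState_apply (E : Matrix L L ℂ) (M : Matrix (K × L) (K × L) ℂ) (k k' : K) :
    condState E M k k' = ∑ l, ∑ l', E l l' * M (k, l') (k', l) := by
  rw [condState, LinearMap.mk₂_apply, traceRight_apply]
  simp only [one_kronecker_mul_apply]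

lemma posSemidef_condState {E : Matrix L L ℂ} (hE : E.PosSemidef) {M : Matrix (K × L) (K × L) ℂ}
    (hM : M.PosSemidef) : (condState E M).PosSemidef := by
  obtain ⟨F, rfl⟩ := exists_conjTranspose_mul_self_eq hE
  have hcycle : condState (Fᴴ * F) M =
      traceRight ((1 ⊗ₖ F : Matrix (K × L) (K × L) ℂ) * M * (1 ⊗ₖ F)ᴴ) := by
    rw [condState, LinearMap.mk₂_apply, conjTranspose_kronecker, conjTranspose_one,
      ← traceRight_one_kronecker_mul_comm, ← Matrix.mul_assoc, ← mul_kronecker_mul, Matrix.one_mul]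
  rw [hcycle]
  exact posSemidef_traceRight (hM.mul_mul_conjTranspose_same _)

variable [DecidableEq L]

lemma condState_one (M : Matrix (K × L) (K × L) ℂ) : condState 1 M = traceRight M := by
  rw [condState, LinearMap.mk₂_apply, one_kronecker_one, Matrix.one_mul]

lemma condState_single (l l' : L) (M : Matrix (K × L) (K × L) ℂ) (k k' : K) :
    condState (Matrix.single l l' 1) M k k' = M (k, l') (k', l) := by
  rw [condState_apply, Finset.sum_eq_single l, Finset.sum_eq_single l'] <;>
    simp +contextual [Matrix.single_apply, eq_comm]

open scoped MatrixOrder Matrix.Norms.L2Operator in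
lemma span_setOf_effect_eq_top {n : Type*} [Finite n] [DecidableEq n] :
    Submodule.span ℂ {E : Matrix n n ℂ | E.PosSemidef ∧ (1 - E).PosSemidef} = ⊤ := by
  have := Fintype.ofFinite n
  rw [← CStarAlgebra.span_nonneg_inter_unitClosedBall]
  congr 1
  ext E
  rw [Set.mem_inter_iff, Set.mem_ofPred_eq, Set.mem_ofPred_eq, mem_closedBall_zero_iff,
    Matrix.nonneg_iff_posSemidef]
  refine and_congr_right fun hE => ?_
  rw [CStarAlgebra.norm_le_one_iff_of_nonneg E hE.nonneg, Matrix.le_iff]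

lemma smul_eq_kronecker_traceLeft {M : Matrix (K × L) (K × L) ℂ} {t : ℂ} {z : Matrix K K ℂ}
    (h : ∀ E : Matrix L L ℂ, E.PosSemidef → (1 - E).PosSemidef →
      t • condState E M = (condState E M).trace • z) :
    t • M = z ⊗ₖ traceLeft M := by
  let lhs : Matrix L L ℂ →ₗ[ℂ] Matrix K K ℂ := t • condState.flip M
  let rhs : Matrix L L ℂ →ₗ[ℂ] Matrix K K ℂ :=
    (traceLinearMap K ℂ ℂ ∘ₗ condState.flip M).smulRight z
  have hext : lhs = rhs :=
    LinearMap.ext_on span_setOf_effect_eq_top fun E hE => h E hE.1 hE.2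
  ext ⟨k, l⟩ ⟨k', l'⟩
  have hentry : t * condState (Matrix.single l' l 1) M k k' =
      (condState (Matrix.single l' l 1) M).trace * z k k' :=
    congrFun₂ (LinearMap.congr_fun hext (Matrix.single l' l 1)) k k'
  simpa only [condState_single, trace, diag_apply, Matrix.smul_apply, smul_eq_mul,
    kroneckerMap_apply, traceLeft_apply, mul_comm (z k k')] using hentry

end PartialTrace

section Separability

variable {A C : Type*} [Fintype A] [Fintype C]

/-- `M` is a separable positive operator. Unlike in a convex combination of product states, the
factors need not be normalised. -/
def IsSeparableOperator (M : Matrix (A × C) (A × C) ℂ) : Prop :=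
  ∃ (κ : Type) (_ : Fintype κ) (X : κ → Matrix A A ℂ) (Y : κ → Matrix C C ℂ),
    (∀ k, (X k).PosSemidef) ∧ (∀ k, (Y k).PosSemidef) ∧ M = ∑ k, X k ⊗ₖ Y k

lemma IsSeparableOperator.exists_convexCombination [DecidableEq A] [DecidableEq C]
    {M : Matrix (A × C) (A × C) ℂ} (hM : IsState M) (h : IsSeparableOperator M) :
    ∃ (n : ℕ) (p : Fin n → ℝ) (σ : Fin n → Matrix A A ℂ) (ω : Fin n → Matrix C C ℂ),
      (∀ i, 0 ≤ p i) ∧ (∑ i, p i = 1) ∧ (∀ i, IsState (σ i)) ∧ (∀ i, IsState (ω i)) ∧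
      M = ∑ i, (p i : ℂ) • (σ i ⊗ₖ ω i) := by
  obtain ⟨κ, _, X, Y, hX, hY, hsum⟩ := h
  choose σ hσ hσX using fun k => exists_isState_smul_eq (hX k)
    ⟨posSemidef_traceRight hM.1, (trace_traceRight M).trans hM.2⟩
  choose ω hω hωY using fun k => exists_isState_smul_eq (hY k)
    ⟨posSemidef_traceLeft hM.1, (trace_traceLeft M).trans hM.2⟩
  let p (k : κ) : ℝ := (X k).trace.re * (Y k).trace.re
  have hp (k : κ) : (p k : ℂ) = (X k ⊗ₖ Y k).trace := by
    rw [trace_kronecker, ← ofReal_re_trace_of_posSemidef (hX k),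
      ← ofReal_re_trace_of_posSemidef (hY k), ← Complex.ofReal_mul]
  have hprod (k : κ) : (p k : ℂ) • (σ k ⊗ₖ ω k) = X k ⊗ₖ Y k := by
    conv_rhs => rw [← hσX k, ← hωY k]
    rw [smul_kronecker, kronecker_smul, smul_smul, ← Complex.coe_smul]
  have hp1 : ∑ k, p k = 1 := by
    have htrace : ((∑ k, p k : ℝ) : ℂ) = 1 := by
      rw [Complex.ofReal_sum, Finset.sum_congr rfl fun k _ => hp k, ← trace_sum, ← hsum, hM.2]
    exact_mod_cast htrace
  let e := (Fintype.equivFin κ).symm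
  refine ⟨Fintype.card κ, p ∘ e, σ ∘ e, ω ∘ e, fun i => mul_nonneg
    (re_trace_nonneg_of_posSemidef (hX _)) (re_trace_nonneg_of_posSemidef (hY _)),
    (e.sum_comp p).trans hp1, fun i => hσ _, fun i => hω _, ?_⟩
  rw [hsum, ← Finset.sum_congr rfl fun k _ => hprod k]
  exact (e.sum_comp fun k => (p k : ℂ) • (σ k ⊗ₖ ω k)).symm

end Separability

section Tripartite

variable {A B C : Type*} [Fintype B]

lemma redAC_eq_sum_submatrix (ρ : Matrix (A × B × C) (A × B × C) ℂ) :
    redAC ρ = ∑ b, ρ.submatrix (fun p : A × C => (p.1, b, p.2)) fun p => (p.1, b, p.2) := by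
  ext p q
  simp only [redAC, of_apply, Matrix.sum_apply, submatrix_apply]

lemma posSemidef_redAC {ρ : Matrix (A × B × C) (A × B × C) ℂ} (hρ : ρ.PosSemidef) :
    (redAC ρ).PosSemidef := by
  rw [redAC_eq_sum_submatrix]
  exact posSemidef_sum _ fun b _ => hρ.submatrix _

lemma redAC_sum {κ : Type*} [Fintype κ] (N : κ → Matrix (A × B × C) (A × B × C) ℂ) :
    redAC (∑ k, N k) = ∑ k, redAC (N k) := by
  ext p q
  simp only [redAC, of_apply, Matrix.sum_apply]
  exact Finset.sum_comm

lemma redAC_zero : redAC (0 : Matrix (A × B × C) (A × B × C) ℂ) = 0 := by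
  ext p q
  simp only [redAC, of_apply, Matrix.zero_apply, Finset.sum_const_zero]

variable [Fintype A] [Fintype C]

lemma isState_redAC [DecidableEq A] [DecidableEq B] [DecidableEq C]
    {ρ : Matrix (A × B × C) (A × B × C) ℂ} (hρ : IsState ρ) : IsState (redAC ρ) := by
  refine ⟨posSemidef_redAC hρ.1, ?_⟩
  simp only [← hρ.2, trace, diag_apply, redAC, of_apply, Fintype.sum_prod_type]
  exact Finset.sum_congr rfl fun a _ => Finset.sum_comm

variable [DecidableEq A] [DecidableEq B] [DecidableEq C]

/-- The identification of operators on `A ⊗ (B ⊗ C)` with operators on `(A ⊗ B) ⊗ C`. -/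
def regroup : Matrix (A × B × C) (A × B × C) ℂ ≃⋆ₐ[ℂ] Matrix ((A × B) × C) ((A × B) × C) ℂ :=
  .ofAlgEquiv (reindexAlgEquiv ℂ ℂ (Equiv.prodAssoc A B C).symm) fun M =>
    (conjTranspose_reindex _ _ M).symm

lemma regroup_apply (M : Matrix (A × B × C) (A × B × C) ℂ) (p q : (A × B) × C) :
    regroup M p q = M (p.1.1, p.1.2, p.2) (q.1.1, q.1.2, q.2) := rfl

lemma posSemidef_regroup {M : Matrix (A × B × C) (A × B × C) ℂ} (hM : M.PosSemidef) :
    (regroup M).PosSemidef :=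
  hM.submatrix _

lemma trace_regroup (M : Matrix (A × B × C) (A × B × C) ℂ) : (regroup M).trace = M.trace := by
  simp only [trace, diag_apply, regroup_apply, Fintype.sum_prod_type]

lemma traceRight_condState_regroup (E : Matrix C C ℂ) (M : Matrix (A × B × C) (A × B × C) ℂ) :
    traceRight (condState E (regroup M)) = condState E (redAC M) := by
  ext a a'
  simp only [traceRight_apply, condState_apply, regroup_apply, redAC, of_apply, Finset.mul_sum]
  rw [Finset.sum_comm]
  exact Finset.sum_congr rfl fun c _ => Finset.sum_comm

/- Measuring `{E, 1 - E}` on the recovered `C` refines an optimal ensemble for `ρ^{AB}` without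
changing its marginals on `A`, so by rigidity the outcome is uncorrelated with `A`. -/
lemma exists_decomposition_smul_redAC_eq_kronecker
    (R : Matrix (A × B) (A × B) ℂ →ₗ[ℂ] Matrix (A × B × C) (A × B × C) ℂ)
    (hR : ∀ τ, τ.PosSemidef → (R τ).PosSemidef) {ρ : Matrix (A × B) (A × B) ℂ} (hρ : IsState ρ)
    (hRρ : traceRight (regroup (R ρ)) = ρ)
    (hRA : ∀ τ, τ.PosSemidef → (ρ - τ).PosSemidef →
      traceRight (traceRight (regroup (R τ))) = traceRight τ) :
    ∃ (κ : Type) (_ : Fintype κ) (θ : κ → Matrix (A × B) (A × B) ℂ), IsDecomposition ρ θ ∧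
      ∀ k, (θ k).trace • redAC (R (θ k)) = traceRight (θ k) ⊗ₖ traceLeft (redAC (R (θ k))) := by
  obtain ⟨κ, _, θ, hθ, hrigid⟩ :=
    exists_decomposition_forall_refinement_smul_map_eq (traceRight.restrictScalars ℝ) hρ
  refine ⟨κ, inferInstance, θ, hθ, fun k => smul_eq_kronecker_traceLeft fun E hE hE' => ?_⟩
  have hN (k : κ) := posSemidef_regroup (hR _ (hθ.1 k))
  have hA (k : κ) := hRA _ (hθ.1 k) (hθ.posSemidef_sub k)
  let χ (F : Matrix C C ℂ) (k : κ) : Matrix (A × B) (A × B) ℂ := condState F (regroup (R (θ k)))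
  have hadd (k : κ) : χ E k + χ (1 - E) k = traceRight (regroup (R (θ k))) := by
    rw [← LinearMap.add_apply, ← map_add, add_sub_cancel, condState_one]
  have hχ : IsDecomposition ρ (Sum.elim (χ E) (χ (1 - E))) := by
    refine ⟨Sum.rec (fun k => posSemidef_condState hE (hN k)) fun k =>
      posSemidef_condState hE' (hN k), ?_⟩
    simp only [Fintype.sum_sum_type, Sum.elim_inl, Sum.elim_inr, ← Finset.sum_add_distrib, hadd,
      ← map_sum, hθ.2, hRρ]
  have hprop := hrigid _ _ hχ (fun k => (congrArg traceRight (hadd k)).trans (hA k))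
    (fun k => by rw [hadd, ← trace_traceRight, hA, trace_traceRight]) k
  have htrace : (condState E (redAC (R (θ k)))).trace = (χ E k).trace := by
    rw [← traceRight_condState_regroup, trace_traceRight]
  rw [htrace, ← traceRight_condState_regroup, ← ofReal_re_trace_of_posSemidef (hθ.1 k),
    ← ofReal_re_trace_of_posSemidef (posSemidef_condState hE (hN k)), Complex.coe_smul,
    Complex.coe_smul]
  exact hprop

theorem isSeparableOperator_redAC_of_recovery
    (R : Matrix (A × B) (A × B) ℂ →ₗ[ℂ] Matrix (A × B × C) (A × B × C) ℂ)
    (hR : ∀ τ, τ.PosSemidef → (R τ).PosSemidef) {ρ : Matrix (A × B × C) (A × B × C) ℂ}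
    (hρ : IsState ρ) (hRρ : R (traceRight (regroup ρ)) = ρ)
    (hRA : ∀ τ, τ.PosSemidef → (traceRight (regroup ρ) - τ).PosSemidef →
      traceRight (traceRight (regroup (R τ))) = traceRight τ) :
    IsSeparableOperator (redAC ρ) := by
  have hρAB : IsState (traceRight (regroup ρ)) :=
    ⟨posSemidef_traceRight (posSemidef_regroup hρ.1),
      (trace_traceRight _).trans ((trace_regroup ρ).trans hρ.2)⟩
  obtain ⟨κ, _, θ, hθ, hprod⟩ :=
    exists_decomposition_smul_redAC_eq_kronecker R hR hρAB (by rw [hRρ]) hRA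
  refine ⟨κ, inferInstance, fun k => traceRight (θ k),
    fun k => (θ k).trace⁻¹ • traceLeft (redAC (R (θ k))), fun k => posSemidef_traceRight (hθ.1 k),
    fun k => (posSemidef_traceLeft (posSemidef_redAC (hR _ (hθ.1 k)))).smul
      (inv_nonneg.2 (hθ.1 k).trace_nonneg), ?_⟩
  calc redAC ρ = ∑ k, redAC (R (θ k)) := by rw [← redAC_sum, ← map_sum, hθ.2, hRρ]
    _ = ∑ k, traceRight (θ k) ⊗ₖ ((θ k).trace⁻¹ • traceLeft (redAC (R (θ k)))) :=
      Finset.sum_congr rfl fun k _ => ?_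
  rw [kronecker_smul, ← hprod k, smul_smul]
  by_cases htr : (θ k).trace = 0
  · rw [(hθ.1 k).trace_eq_zero_iff.1 htr, map_zero, redAC_zero, smul_zero]
  · rw [inv_mul_cancel₀ htr, one_smul]

end Tripartite

section Entropy

variable {n m : Type*} [Fintype n] [DecidableEq n] [Fintype m] [DecidableEq m]

lemma trace_cfc_eq_sum_eigenvalues {M : Matrix n n ℂ} (hM : M.IsHermitian) (f : ℝ → ℝ) :
    (cfc f M).trace = ∑ i, (f (hM.eigenvalues i) : ℂ) := by
  rw [hM.cfc_eq, IsHermitian.cfc, Unitary.conjStarAlgAut_apply, trace_mul_cycle,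
    Unitary.coe_star_mul_self, Matrix.one_mul, trace_diagonal]
  rfl

lemma vNEntropy_mul_log_two {M : Matrix n n ℂ} (hM : M.IsHermitian) :
    vNEntropy M * Real.log 2 = -(M * cfc Real.log M).trace.re := by
  have htrace : (M * cfc Real.log M).trace.re =
      ∑ i, hM.eigenvalues i * Real.log (hM.eigenvalues i) := by
    nth_rw 1 [← cfc_id_matrix hM]
    rw [cfc_mul_cfc_matrix, trace_cfc_eq_sum_eigenvalues hM, ← Complex.ofReal_sum,
      Complex.ofReal_re]
  have hlog : Real.log 2 ≠ 0 := (Real.log_pos one_lt_two).ne'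
  simp only [vNEntropy, dif_pos hM, htrace, neg_mul, Finset.sum_mul, Real.logb, mul_assoc,
    div_mul_cancel₀ _ hlog]

lemma IsMarginal.relEntropy_map {ι : Matrix m m ℂ →⋆ₐ[ℂ] Matrix n n ℂ} {ρ : Matrix n n ℂ}
    {ρ' : Matrix m m ℂ} (h : IsMarginal ι ρ ρ') (hρ : ρ.IsHermitian) (hρ' : ρ'.IsHermitian) :
    relEntropy ρ (ι ρ') = (vNEntropy ρ' - vNEntropy ρ) * Real.log 2 := by
  rw [relEntropy, ← map_cfc_matrix ι _ hρ', trace_mul_comm ρ (ι _), h, trace_mul_comm _ ρ',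
    sub_mul, vNEntropy_mul_log_two hρ, vNEntropy_mul_log_two hρ']
  ring

end Entropy

section LocalAlgebras

variable {K L : Type*} [Fintype K] [DecidableEq K] [Fintype L] [DecidableEq L]

/-- The embedding `X ↦ X ⊗ 1` of the operators on the first factor. -/
def kroneckerOneHom : Matrix K K ℂ →⋆ₐ[ℂ] Matrix (K × L) (K × L) ℂ where
  toFun X := X ⊗ₖ 1
  map_one' := one_kronecker_one
  map_mul' X Y := by rw [← mul_kronecker_mul, Matrix.mul_one]
  map_zero' := zero_kronecker _
  map_add' X Y := add_kronecker X Y _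
  commutes' r := by simp only [Algebra.algebraMap_eq_smul_one, smul_kronecker, one_kronecker_one]
  map_star' X := by simp only [star_eq_conjTranspose, conjTranspose_kronecker, conjTranspose_one]

/-- The embedding `Y ↦ 1 ⊗ Y` of the operators on the second factor. -/
def oneKroneckerHom : Matrix L L ℂ →⋆ₐ[ℂ] Matrix (K × L) (K × L) ℂ where
  toFun Y := 1 ⊗ₖ Y
  map_one' := one_kronecker_one
  map_mul' X Y := by rw [← mul_kronecker_mul, Matrix.mul_one]
  map_zero' := kronecker_zero _
  map_add' X Y := kronecker_add _ X Y
  commutes' r := by simp only [Algebra.algebraMap_eq_smul_one, kronecker_smul, one_kronecker_one]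
  map_star' X := by simp only [star_eq_conjTranspose, conjTranspose_kronecker, conjTranspose_one]

lemma kroneckerOneHom_apply (X : Matrix K K ℂ) :
    kroneckerOneHom X = (X ⊗ₖ 1 : Matrix (K × L) (K × L) ℂ) := rfl

lemma oneKroneckerHom_apply (Y : Matrix L L ℂ) :
    oneKroneckerHom Y = (1 ⊗ₖ Y : Matrix (K × L) (K × L) ℂ) := rfl

lemma posSemidef_oneKroneckerHom {Y : Matrix L L ℂ} (hY : Y.PosSemidef) :
    (oneKroneckerHom Y : Matrix (K × L) (K × L) ℂ).PosSemidef :=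
  PosSemidef.one.kronecker hY

lemma commute_kroneckerOneHom_oneKroneckerHom (X : Matrix K K ℂ) (Y : Matrix L L ℂ) :
    Commute (kroneckerOneHom X) (oneKroneckerHom Y) := by
  simp only [Commute, SemiconjBy, kroneckerOneHom_apply, oneKroneckerHom_apply,
    ← mul_kronecker_mul, Matrix.one_mul, Matrix.mul_one]

lemma isMarginal_kroneckerOneHom (M : Matrix (K × L) (K × L) ℂ) :
    IsMarginal kroneckerOneHom M (traceRight M) := by
  intro X
  simp only [trace, diag_apply, Matrix.mul_apply, kroneckerOneHom_apply, kroneckerMap_apply,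
    Matrix.one_apply, traceRight_apply, Fintype.sum_prod_type, mul_ite, mul_one, mul_zero, ite_mul,
    zero_mul, Finset.sum_ite_eq, Finset.mem_univ, if_true, Finset.mul_sum]
  exact Finset.sum_congr rfl fun k _ => Finset.sum_comm

lemma isMarginal_oneKroneckerHom (M : Matrix (K × L) (K × L) ℂ) :
    IsMarginal oneKroneckerHom M (traceLeft M) := by
  intro Y
  simp only [trace, diag_apply, Matrix.mul_apply (M := Y), oneKroneckerHom_apply,
    one_kronecker_mul_apply, traceLeft_apply, Fintype.sum_prod_type_right, Finset.mul_sum]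
  exact Finset.sum_congr rfl fun l _ => Finset.sum_comm

end LocalAlgebras

section StrongSubadditivity

variable {A B C : Type*} [Fintype A] [DecidableEq A] [Fintype B] [DecidableEq B]
  [Fintype C] [DecidableEq C]

/-- The embedding `X ↦ X ⊗ 1_C` of the operators on `A ⊗ B` into those on `A ⊗ (B ⊗ C)`. -/
def embedAB : Matrix (A × B) (A × B) ℂ →⋆ₐ[ℂ] Matrix (A × B × C) (A × B × C) ℂ :=
  regroup.symm.toStarAlgHom.comp kroneckerOneHom

lemma embedAB_apply (X : Matrix (A × B) (A × B) ℂ) (x y : A × B × C) :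
    embedAB X x y = X (x.1, x.2.1) (y.1, y.2.1) * (1 : Matrix C C ℂ) x.2.2 y.2.2 := rfl

lemma regroup_embedAB (X : Matrix (A × B) (A × B) ℂ) :
    regroup (embedAB X : Matrix (A × B × C) (A × B × C) ℂ) = kroneckerOneHom X := rfl

lemma isMarginal_embedAB (M : Matrix (A × B × C) (A × B × C) ℂ) :
    IsMarginal embedAB M (traceRight (regroup M)) := by
  intro X
  rw [← trace_regroup, map_mul, regroup_embedAB, isMarginal_kroneckerOneHom]

lemma embedAB_kroneckerOneHom (W : Matrix A A ℂ) :
    (embedAB (kroneckerOneHom W) : Matrix (A × B × C) (A × B × C) ℂ) = kroneckerOneHom W := by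
  ext x y
  simp only [embedAB_apply, kroneckerOneHom_apply, kroneckerMap_apply, mul_assoc,
    ← one_kronecker_one (m := B) (n := C)]

lemma traceRight_regroup_oneKroneckerHom (Y : Matrix (B × C) (B × C) ℂ) :
    traceRight (regroup (oneKroneckerHom Y : Matrix (A × B × C) (A × B × C) ℂ)) =
      oneKroneckerHom (traceRight Y) := by
  ext x y
  simp only [traceRight_apply, regroup_apply, oneKroneckerHom_apply, kroneckerMap_apply,
    Finset.mul_sum]

lemma traceRight_traceLeft (M : Matrix (A × B × C) (A × B × C) ℂ) :
    traceRight (traceLeft M) = traceLeft (traceRight (regroup M)) := by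
  ext b b'
  simp only [traceRight_apply, traceLeft_apply, regroup_apply]
  exact Finset.sum_comm

/-- The Petz recovery map from `A ⊗ B` to `A ⊗ B ⊗ C` with respect to `1_A ⊗ ρ^{BC}`. It acts only
on `B`, which it extends to `B ⊗ C`. -/
noncomputable def recoveryMap (ρ : Matrix (A × B × C) (A × B × C) ℂ) :
    Matrix (A × B) (A × B) ℂ →ₗ[ℂ] Matrix (A × B × C) (A × B × C) ℂ :=
  petzMap embedAB (oneKroneckerHom (traceLeft ρ))
    (oneKroneckerHom (traceLeft (traceRight (regroup ρ))))

lemma isMarginal_oneKroneckerHom_traceLeft (ρ : Matrix (A × B × C) (A × B × C) ℂ) :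
    IsMarginal embedAB (oneKroneckerHom (traceLeft ρ) : Matrix (A × B × C) (A × B × C) ℂ)
      (oneKroneckerHom (traceLeft (traceRight (regroup ρ)))) := by
  rw [← traceRight_traceLeft, ← traceRight_regroup_oneKroneckerHom]
  exact isMarginal_embedAB _

variable {ρ : Matrix (A × B × C) (A × B × C) ℂ}

lemma relEntropy_eq_of_saturated_SSA (hρ : ρ.PosSemidef)
    (hsat : S3AB ρ + S3BC ρ - S3ABC ρ - S3B ρ = 0) :
    relEntropy ρ (oneKroneckerHom (traceLeft ρ)) = relEntropy (traceRight (regroup ρ))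
      (oneKroneckerHom (traceLeft (traceRight (regroup ρ)))) := by
  have hAB := posSemidef_traceRight (posSemidef_regroup hρ)
  have hsat' : vNEntropy (traceRight (regroup ρ)) + vNEntropy (traceLeft ρ) - vNEntropy ρ -
      vNEntropy (traceLeft (traceRight (regroup ρ))) = 0 := hsat
  rw [(isMarginal_oneKroneckerHom ρ).relEntropy_map hρ.1 (posSemidef_traceLeft hρ).1,
    (isMarginal_oneKroneckerHom _).relEntropy_map hAB.1 (posSemidef_traceLeft hAB).1]
  linear_combination Real.log 2 * hsat'

lemma recoveryMap_eq_self_of_saturated_SSA (hρ : ρ.PosSemidef)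
    (hsat : S3AB ρ + S3BC ρ - S3ABC ρ - S3B ρ = 0) :
    recoveryMap ρ (traceRight (regroup ρ)) = ρ := by
  have hAB := posSemidef_traceRight (posSemidef_regroup hρ)
  have hBC := posSemidef_traceLeft hρ
  have hB := posSemidef_traceLeft hAB
  exact petzMap_eq_of_relEntropy_eq (isMarginal_oneKroneckerHom_traceLeft ρ) (isMarginal_embedAB ρ)
    (posSemidef_oneKroneckerHom hBC) hρ (posSemidef_oneKroneckerHom hB) hAB
    ((isMarginal_oneKroneckerHom _).mul_suppProj_map hρ hBC.1)
    ((isMarginal_oneKroneckerHom _).mul_suppProj_map hAB hB.1)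
    (relEntropy_eq_of_saturated_SSA hρ hsat)

lemma traceRight_recoveryMap (hρ : ρ.PosSemidef) {τ : Matrix (A × B) (A × B) ℂ}
    (hτ : τ.PosSemidef) (hle : (traceRight (regroup ρ) - τ).PosSemidef) :
    traceRight (traceRight (regroup (recoveryMap ρ τ))) = traceRight τ := by
  have hAB := posSemidef_traceRight (posSemidef_regroup hρ)
  have hB := posSemidef_traceLeft hAB
  have hsupp := mul_eq_of_mul_eq_of_le hτ hle
    ((isMarginal_oneKroneckerHom _).mul_suppProj_map hAB hB.1)
  refine Matrix.ext_iff_trace_mul_left.2 fun W => ?_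
  rw [← isMarginal_kroneckerOneHom, ← isMarginal_embedAB, ← isMarginal_kroneckerOneHom τ]
  refine trace_map_mul_petzMap (isMarginal_oneKroneckerHom_traceLeft ρ)
    (posSemidef_oneKroneckerHom (posSemidef_traceLeft hρ)) (posSemidef_oneKroneckerHom hB) ?_
    (commute_kroneckerOneHom_oneKroneckerHom W _) hsupp
  rw [embedAB_kroneckerOneHom]
  exact commute_kroneckerOneHom_oneKroneckerHom W _

end StrongSubadditivity

/-- **Separability of `ρ^{AC}`.** If a tripartite state saturates strong
subadditivity at pivot `B`, i.e. `I(A;C|B) = 0`, then the reduced state on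
`A ⊗ C` is separable: a finite convex combination of product states. -/
theorem reduced_state_separable_of_saturated_SSA
    {A B C : Type*} [Fintype A] [DecidableEq A] [Fintype B] [DecidableEq B]
    [Fintype C] [DecidableEq C]
    (ρ : Matrix (A × B × C) (A × B × C) ℂ) (hρ : IsState ρ)
    (hsat : S3AB ρ + S3BC ρ - S3ABC ρ - S3B ρ = 0) :
    ∃ (n : ℕ) (p : Fin n → ℝ) (σ : Fin n → Matrix A A ℂ) (ω : Fin n → Matrix C C ℂ),
      (∀ i, 0 ≤ p i) ∧ (∑ i, p i = 1) ∧
      (∀ i, IsState (σ i)) ∧ (∀ i, IsState (ω i)) ∧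
      redAC ρ = ∑ i, (p i : ℂ) • (σ i ⊗ₖ ω i) := by
  exact (isSeparableOperator_redAC_of_recovery (recoveryMap ρ)
    (fun τ hτ => posSemidef_petzMap _ _ _ hτ) hρ
    (recoveryMap_eq_self_of_saturated_SSA hρ.1 hsat)
    fun τ hτ hle => traceRight_recoveryMap hρ.1 hτ hle).exists_convexCombination
      (isState_redAC hρ)
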